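/- arXiv:2204.07419 — 10 statements merged into one kernel-verified Lean document; each statement's English description precedes it below -/
import Mathlib

section
/- Let p be a prime. The set A of all functions f : ℚ_p → ℚ_p that are strictly differentiable of order 1 on ℚ_p but not strictly differentiable of order 2 on ℚ_p is 𝔠-lineable in the ℚ_p-vector space of all functions ℚ_p → ℚ_p: there exists a ℚ_p-submodule M of the space of functions ℚ_p → ℚ_p whose rank over ℚ_p equals the cardinality 𝔠 of the continuum and such that M \ {0} ⊆ A. -/
open Filter Topology

noncomputable section

open Classical in
/-- The shell-constant model function: `p^(2v)` on shells of even valuation `v`, else `0`. -/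
def shellFun (p : ℕ) [Fact p.Prime] (x : ℚ_[p]) : ℚ_[p] :=
  if x = 0 then 0 else if Even x.valuation then (p : ℚ_[p]) ^ (2 * x.valuation) else 0

/-- Index of the block containing `x`. -/
def blockIdx (p : ℕ) [Fact p.Prime] (x : ℚ_[p]) : ℕ := (-x.valuation).toNat

/-- Center of the `k`-th block. -/
def blockCen (p : ℕ) [Fact p.Prime] (k : ℕ) : ℚ_[p] := (p : ℚ_[p]) ^ (-(k : ℤ))

/-- The linear embedding of sequences into functions. -/
def blockMap (p : ℕ) [Fact p.Prime] : (ℕ → ℚ_[p]) →ₗ[ℚ_[p]] (ℚ_[p] → ℚ_[p]) where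
  toFun b x := b (blockIdx p x) * shellFun p (x - blockCen p (blockIdx p x))
  map_add' a b := by ext x; simp [add_mul]
  map_smul' c b := by ext x; simp [mul_assoc]

variable {p : ℕ} [Fact p.Prime]

lemma valuation_eq_of_norm_eq {x y : ℚ_[p]} (hx : x ≠ 0) (h : ‖x‖ = ‖y‖) :
    x.valuation = y.valuation := by
  have hy : y ≠ 0 := by rw [← norm_ne_zero_iff, ← h]; exact norm_ne_zero_iff.2 hx
  rw [Padic.norm_eq_zpow_neg_valuation hx, Padic.norm_eq_zpow_neg_valuation hy] at h
  have hp : 1 < (p : ℝ) := by exact_mod_cast (Fact.out : p.Prime).one_lt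
  have := zpow_right_injective₀ (by linarith) hp.ne' h
  linarith

lemma shellFun_eq {x y : ℚ_[p]} (h : ‖x‖ = ‖y‖) : shellFun p x = shellFun p y := by
  by_cases hx : x = 0
  · subst hx
    have : y = 0 := by rw [← norm_eq_zero, ← h, norm_zero]
    rw [this]
  · have hy : y ≠ 0 := by rw [← norm_ne_zero_iff, ← h]; exact norm_ne_zero_iff.2 hx
    simp [shellFun, hx, hy, valuation_eq_of_norm_eq hx h]

lemma shellFun_norm_le (x : ℚ_[p]) : ‖shellFun p x‖ ≤ ‖x‖ ^ 2 := by
  unfold shellFun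
  split_ifs with h0 h1
  · simp
  · rw [Padic.norm_p_zpow, Padic.norm_eq_zpow_neg_valuation h0, ← zpow_natCast, ← zpow_mul]
    apply le_of_eq; congr 1; push_cast; ring
  · simp

lemma shellFun_sub_le (u v : ℚ_[p]) :
    ‖shellFun p u - shellFun p v‖ ≤ ‖u - v‖ * max ‖u‖ ‖v‖ := by
  by_cases h : ‖u‖ = ‖v‖
  · rw [shellFun_eq h]; simp; positivity
  · have h1 : ‖u - v‖ = max ‖u‖ ‖v‖ := by
      rw [sub_eq_add_neg, Padic.add_eq_max_of_ne (by simpa using h), norm_neg]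
    rw [h1]
    have h2 := Padic.nonarchimedean (shellFun p u) (-shellFun p v)
    rw [← sub_eq_add_neg, norm_neg] at h2
    refine h2.trans (max_le ((shellFun_norm_le u).trans ?_) ((shellFun_norm_le v).trans ?_))
    · rw [sq]; gcongr <;> exact le_max_left _ _
    · rw [sq]; gcongr <;> exact le_max_right _ _

lemma eventually_norm_eq {x : ℚ_[p]} (hx : x ≠ 0) : ∀ᶠ u in 𝓝 x, ‖u‖ = ‖x‖ := by
  filter_upwards [Metric.ball_mem_nhds x (norm_pos_iff.2 hx)] with u hu
  exact Padic.norm_eq_of_norm_sub_lt_right (by simpa [dist_eq_norm] using hu)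

lemma shellFun_continuous : Continuous (shellFun p) := by
  rw [continuous_iff_continuousAt]
  intro x
  by_cases hx : x = 0
  · subst hx
    have h0 : shellFun p 0 = 0 := by simp [shellFun]
    unfold ContinuousAt
    rw [h0]
    apply squeeze_zero_norm shellFun_norm_le
    have : Continuous fun x : ℚ_[p] => ‖x‖ ^ 2 := by fun_prop
    simpa using this.tendsto 0
  · apply (continuousAt_const (y := shellFun p x)).congr
    filter_upwards [eventually_norm_eq hx] with u hu
    exact (shellFun_eq hu).symm

lemma shellFun_quot_continuous : Continuous fun q : ℚ_[p] × ℚ_[p] =>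
    (shellFun p q.1 - shellFun p q.2) / (q.1 - q.2) := by
  rw [continuous_iff_continuousAt]
  rintro ⟨x, y⟩
  have hc := shellFun_continuous (p := p)
  by_cases hxy : x = y
  · subst hxy
    by_cases hx : x = 0
    · subst hx
      unfold ContinuousAt
      simp only [sub_self, div_zero]
      apply squeeze_zero_norm (a := fun q : ℚ_[p] × ℚ_[p] => max ‖q.1‖ ‖q.2‖)
      · intro q
        rw [norm_div]
        apply div_le_of_le_mul₀ (norm_nonneg _) (by positivity)
        rw [mul_comm]
        exact shellFun_sub_le _ _
      · have : Continuous fun q : ℚ_[p] × ℚ_[p] => max ‖q.1‖ ‖q.2‖ := by fun_prop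
        simpa using this.tendsto (0, 0)
    · apply (continuousAt_const (y := (0 : ℚ_[p]))).congr
      have h := eventually_norm_eq hx
      filter_upwards [h.prod_nhds h] with q hq
      rw [shellFun_eq (hq.1.trans hq.2.symm)]; simp
  · apply ContinuousAt.div
    · fun_prop
    · fun_prop
    · exact sub_ne_zero.2 hxy

lemma blockIdx_eq {x y : ℚ_[p]} (h : ‖x - y‖ ≤ 1) : blockIdx p x = blockIdx p y := by
  by_cases hx : ‖x‖ ≤ 1
  · have hy : ‖y‖ ≤ 1 := by
      have := Padic.nonarchimedean x (-(x - y))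
      rw [norm_neg] at this
      simpa using this.trans (max_le hx h)
    rw [Padic.norm_le_one_iff_val_nonneg] at hx hy
    unfold blockIdx; omega
  · have h1 : ‖x‖ = ‖y‖ := Padic.norm_eq_of_norm_sub_lt_left (by linarith)
    have hx0 : x ≠ 0 := by rintro rfl; simp at hx
    unfold blockIdx
    rw [valuation_eq_of_norm_eq hx0 h1]

lemma blockIdx_cen (k : ℕ) : blockIdx p (blockCen p k) = k := by
  simp [blockIdx, blockCen, Padic.valuation_zpow, Padic.valuation_pow]

lemma blockMap_apply_near (b : ℕ → ℚ_[p]) {x u : ℚ_[p]} (h : ‖u - x‖ ≤ 1) :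
    blockMap p b u = b (blockIdx p x) * shellFun p (u - blockCen p (blockIdx p x)) := by
  simp [blockMap, blockIdx_eq h]

lemma eventually_near (x : ℚ_[p]) : ∀ᶠ u in 𝓝 x, ‖u - x‖ ≤ 1 := by
  filter_upwards [Metric.closedBall_mem_nhds x one_pos] with u hu
  simpa [dist_eq_norm] using hu

lemma blockMap_continuous (b : ℕ → ℚ_[p]) : Continuous (blockMap p b) := by
  rw [continuous_iff_continuousAt]
  intro x
  have hc := shellFun_continuous (p := p)
  have : ContinuousAt (fun u => b (blockIdx p x) *
      shellFun p (u - blockCen p (blockIdx p x))) x := by fun_prop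
  apply this.congr
  filter_upwards [eventually_near x] with u hu
  rw [blockMap_apply_near b hu]

lemma blockMap_quot_continuous (b : ℕ → ℚ_[p]) : Continuous fun q : ℚ_[p] × ℚ_[p] =>
    (blockMap p b q.1 - blockMap p b q.2) / (q.1 - q.2) := by
  rw [continuous_iff_continuousAt]
  rintro ⟨x, y⟩
  have hc := blockMap_continuous b
  by_cases hxy : x = y
  · subst hxy
    have h2 : Continuous fun q : ℚ_[p] × ℚ_[p] =>
        (q.1 - blockCen p (blockIdx p x), q.2 - blockCen p (blockIdx p x)) := by fun_prop
    have h3 := (continuous_const (y := b (blockIdx p x))).mul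
      (shellFun_quot_continuous.comp h2)
    apply (h3.continuousAt (x := (x, x))).congr
    filter_upwards [(eventually_near x).prod_nhds (eventually_near x)] with q hq
    rw [blockMap_apply_near b hq.1, blockMap_apply_near b hq.2]
    change b _ * ((shellFun p (q.1 - blockCen p (blockIdx p x)) -
      shellFun p (q.2 - blockCen p (blockIdx p x))) /
      ((q.1 - blockCen p (blockIdx p x)) - (q.2 - blockCen p (blockIdx p x)))) = _
    rw [sub_sub_sub_cancel_right]
    ring
  · apply ContinuousAt.div
    · fun_prop
    · fun_prop
    · exact sub_ne_zero.2 hxy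

lemma p_ne_zero' : (p : ℚ_[p]) ≠ 0 := by exact_mod_cast (Fact.out : p.Prime).ne_zero

lemma shellFun_pow_even (m : ℕ) : shellFun p ((p : ℚ_[p]) ^ (2 * m)) = p ^ (4 * m) := by
  have : Even ((2 * m : ℕ) : ℤ) := ⟨m, by push_cast; ring⟩
  simp [shellFun, (Fact.out : p.Prime).ne_zero, Padic.valuation_pow]
  rw [← zpow_natCast]; congr 1; push_cast; ring

lemma shellFun_pow_odd (m : ℕ) : shellFun p ((p : ℚ_[p]) ^ (2 * m + 1)) = 0 := by
  simp [shellFun, (Fact.out : p.Prime).ne_zero, Padic.valuation_pow]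

lemma blockMap_cen_add (b : ℕ → ℚ_[p]) (k m : ℕ) :
    blockMap p b (blockCen p k + (p : ℚ_[p]) ^ m) = b k * shellFun p ((p : ℚ_[p]) ^ m) := by
  rw [blockMap_apply_near (x := blockCen p k), blockIdx_cen]
  · simp
  · rw [add_sub_cancel_left, norm_pow]
    exact pow_le_one₀ (norm_nonneg _) Padic.norm_p_lt_one.le

lemma blockMap_cen (b : ℕ → ℚ_[p]) (k : ℕ) : blockMap p b (blockCen p k) = 0 := by
  rw [blockMap_apply_near b (u := blockCen p k) (x := blockCen p k) (by simp), blockIdx_cen]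
  simp [shellFun]

lemma blockMap_not_C2 (b : ℕ → ℚ_[p]) (hb : b ≠ 0) :
    ¬ (∃ G : ℚ_[p] × ℚ_[p] × ℚ_[p] → ℚ_[p], Continuous G ∧
            ∀ x y z : ℚ_[p], x ≠ y → x ≠ z → y ≠ z →
              G (x, y, z) =
                ((blockMap p b x - blockMap p b z) / (x - z) -
                  (blockMap p b y - blockMap p b z) / (y - z)) / (x - y)) := by
  rintro ⟨G, hG, h⟩
  obtain ⟨k, hk⟩ := Function.ne_iff.1 hb
  simp only [Pi.zero_apply] at hk
  have hv0 := blockMap_cen b k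
  have hv := blockMap_cen_add b k
  generalize blockCen p k = z at hv0 hv
  have hp0 : (p : ℚ_[p]) ≠ 0 := p_ne_zero'
  have hp1 : (1 : ℚ_[p]) - p ≠ 0 := by
    rw [sub_ne_zero]; exact_mod_cast (Fact.out : p.Prime).one_lt.ne
  have hne : ∀ m : ℕ, z + (p : ℚ_[p]) ^ m ≠ z := fun m => by simp [hp0]
  have hne' : ∀ m : ℕ, z + (p : ℚ_[p]) ^ m ≠ z + (p : ℚ_[p]) ^ (m + 1) := fun m hm => by
    have : (p : ℚ_[p]) ^ m * (1 - p) = 0 := by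
      rw [pow_succ] at hm; linear_combination hm
    simp [hp0, hp1] at this
  have hval := fun m => h _ _ _ (hne' m) (hne m) (hne (m + 1))
  simp only [hv, hv0] at hval
  simp only [sub_zero, add_sub_cancel_left, add_sub_add_left_eq_sub] at hval
  have hpt : Tendsto (fun m : ℕ => (p : ℚ_[p]) ^ m) atTop (𝓝 0) :=
    tendsto_pow_atTop_nhds_zero_of_norm_lt_one Padic.norm_p_lt_one
  have hA : Tendsto (fun m : ℕ => z + (p : ℚ_[p]) ^ m) atTop (𝓝 z) := by
    simpa using hpt.const_add z
  have hT : Tendsto (fun m : ℕ => G (z + (p : ℚ_[p]) ^ m, z + (p : ℚ_[p]) ^ (m + 1), z))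
      atTop (𝓝 (G (z, z, z))) := by
    apply (hG.tendsto (z, z, z)).comp
    exact hA.prodMk_nhds (((tendsto_add_atTop_iff_nat 1).2 hA).prodMk_nhds tendsto_const_nhds)
  have t1 : Tendsto (fun m : ℕ => 2 * m) atTop atTop :=
    tendsto_atTop_mono (fun m => by simp only [id]; omega) tendsto_id
  have t2 : Tendsto (fun m : ℕ => 2 * m + 1) atTop atTop :=
    tendsto_atTop_mono (fun m => by simp only [id]; omega) tendsto_id
  have e1 : ∀ m : ℕ, G (z + (p : ℚ_[p]) ^ (2 * m), z + (p : ℚ_[p]) ^ (2 * m + 1), z)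
      = b k / (1 - p) := by
    intro m
    rw [hval, shellFun_pow_even, shellFun_pow_odd]
    have : (p : ℚ_[p]) ^ (2 * m) - p ^ (2 * m + 1) = p ^ (2 * m) * (1 - p) := by ring
    rw [this]
    field_simp
    ring
  have e2 : ∀ m : ℕ, G (z + (p : ℚ_[p]) ^ (2 * m + 1), z + (p : ℚ_[p]) ^ (2 * m + 1 + 1), z)
      = - (p * b k) / (1 - p) := by
    intro m
    rw [hval, shellFun_pow_odd, show 2 * m + 1 + 1 = 2 * (m + 1) by ring, shellFun_pow_even]
    have : (p : ℚ_[p]) ^ (2 * m + 1) - p ^ (2 * (m + 1)) = p ^ (2 * m + 1) * (1 - p) := by ring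
    rw [this]
    field_simp
    ring
  have l1 := hT.comp t1
  have l2 := hT.comp t2
  simp only [Function.comp_def, e1] at l1
  simp only [Function.comp_def, e2] at l2
  have q1 := tendsto_nhds_unique l1 tendsto_const_nhds
  have q2 := tendsto_nhds_unique l2 tendsto_const_nhds
  rw [q1] at q2
  field_simp at q2
  have hp2 : (1 : ℚ_[p]) + p ≠ 0 := by
    have : ((1 + p : ℕ) : ℚ_[p]) ≠ 0 := by
      rw [Nat.cast_ne_zero]; omega
    simpa using this
  apply hp2
  have : b k * (1 + p) = 0 := by linear_combination b k * q2
  simpa [hk] using this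

lemma mk_padic (p : ℕ) [Fact p.Prime] : Cardinal.mk ℚ_[p] = Cardinal.continuum := by
  apply le_antisymm
  · have h1 : Cardinal.mk ℚ_[p] ≤ Cardinal.mk (CauSeq ℚ (padicNorm p)) :=
      Cardinal.mk_le_of_surjective (f := fun s => (Quotient.mk _ s : ℚ_[p])) Quotient.mk_surjective
    have h2 : Cardinal.mk (CauSeq ℚ (padicNorm p)) ≤ Cardinal.mk (ℕ → ℚ) :=
      Cardinal.mk_le_of_injective (f := fun s => s.1) Subtype.val_injective
    refine h1.trans (h2.trans ?_)
    simp
  · exact continuum_le_cardinal_of_nontriviallyNormedField ℚ_[p]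

lemma blockMap_injective : Function.Injective (blockMap p) := by
  rw [← LinearMap.ker_eq_bot, LinearMap.ker_eq_bot']
  intro b hb
  by_contra h0
  apply blockMap_not_C2 b h0
  exact ⟨fun _ => 0, continuous_const, by simp [hb]⟩

end

/-- The set of functions `ℚ_[p] → ℚ_[p]` that are strictly differentiable of
order 1 but not of order 2 on `ℚ_[p]` is `𝔠`-lineable. -/
theorem stmt_0 (p : ℕ) [Fact p.Prime] :
    ∃ M : Submodule ℚ_[p] (ℚ_[p] → ℚ_[p]),
      Module.rank ℚ_[p] M = Cardinal.continuum ∧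
      ∀ f ∈ (M : Set (ℚ_[p] → ℚ_[p])), f ≠ 0 →
        (∃ F : ℚ_[p] × ℚ_[p] → ℚ_[p], Continuous F ∧
            ∀ x y : ℚ_[p], x ≠ y → F (x, y) = (f x - f y) / (x - y)) ∧
        ¬ (∃ G : ℚ_[p] × ℚ_[p] × ℚ_[p] → ℚ_[p], Continuous G ∧
            ∀ x y z : ℚ_[p], x ≠ y → x ≠ z → y ≠ z →
              G (x, y, z) =
                ((f x - f z) / (x - z) - (f y - f z) / (y - z)) / (x - y)) := by
  refine ⟨LinearMap.range (blockMap p), ?_, ?_⟩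
  · rw [rank_range_of_injective _ blockMap_injective, rank_fun_infinite]
    simp [mk_padic]
  · rintro f ⟨b, rfl⟩ hf
    refine ⟨⟨_, blockMap_quot_continuous b, fun x y _ => rfl⟩, blockMap_not_C2 b ?_⟩
    rintro rfl
    simp at hf
end

section
/- Let p be a prime and let r ≥ 1 be a natural number. The set A of all functions f : ℚ_p → ℚ_p that are strictly differentiable of order r on ℚ_p but not strictly differentiable of order r+1 on ℚ_p is 𝔠-lineable in the ℚ_p-vector space of all functions ℚ_p → ℚ_p: there exists a ℚ_p-submodule M of the space of functions ℚ_p → ℚ_p whose rank over ℚ_p equals the cardinality 𝔠 of the continuum and such that M \ {0} ⊆ A. -/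
/-- The `r`-th difference quotient `Φ_r f` of a function `f : ℚ_[p] → ℚ_[p]`, defined on
tuples `(x₁, …, x_{r+1})` (indexed by `Fin (r+1)`), recursively by `Φ₀ f = f` and
`Φ_r f (x₁, x₂, …, x_{r+1}) =
  (Φ_{r-1} f (x₁, x₃, …, x_{r+1}) - Φ_{r-1} f (x₂, x₃, …, x_{r+1})) / (x₁ - x₂)`.
Only its values at injective (pairwise distinct) tuples are relevant. -/
noncomputable def diffQuotient (p : ℕ) [Fact p.Prime] :
    (r : ℕ) → (ℚ_[p] → ℚ_[p]) → (Fin (r + 1) → ℚ_[p]) → ℚ_[p]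
  | 0, f, x => f (x 0)
  | r + 1, f, x =>
      (diffQuotient p r f (fun i => x ((1 : Fin (r + 2)).succAbove i)) -
        diffQuotient p r f (fun i => x ((0 : Fin (r + 2)).succAbove i))) / (x 0 - x 1)

open Filter Topology

/-- Divided difference over a finite set of nodes. -/
noncomputable def divDiff {K : Type*} [Field K] [DecidableEq K] (f : K → K) (s : Finset K) : K :=
  ∑ a ∈ s, f a * ∏ b ∈ s.erase a, (a - b)⁻¹

section field
variable {K : Type*} [Field K] [DecidableEq K]

lemma divDiff_erase (f : K → K) (s : Finset K) (b : K) (hb : b ∈ s) :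
    divDiff f (s.erase b) = ∑ c ∈ s, f c * (∏ d ∈ s.erase c, (c - d)⁻¹) * (c - b) := by
  rw [← Finset.add_sum_erase s _ hb, sub_self, mul_zero, zero_add]
  refine Finset.sum_congr rfl fun c hc => ?_
  have hcb : c ≠ b := Finset.ne_of_mem_erase hc
  have hb' : b ∈ s.erase c := Finset.mem_erase.2 ⟨hcb.symm, hb⟩
  rw [← Finset.mul_prod_erase (s.erase c) _ hb', Finset.erase_right_comm]
  have : c - b ≠ 0 := sub_ne_zero.2 hcb
  field_simp

lemma divDiff_rec (f : K → K) (s : Finset K) (a b : K) (ha : a ∈ s) (hb : b ∈ s) (hab : a ≠ b) :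
    divDiff f s = (divDiff f (s.erase b) - divDiff f (s.erase a)) / (a - b) := by
  have h : a - b ≠ 0 := sub_ne_zero.2 hab
  rw [divDiff_erase f s b hb, divDiff_erase f s a ha, ← Finset.sum_sub_distrib, eq_div_iff h,
    divDiff, Finset.sum_mul]
  refine Finset.sum_congr rfl fun c _ => ?_
  ring

lemma divDiff_const (w : K) (k : ℕ) : ∀ (f : K → K) (s : Finset K), s.card = k + 2 →
    (∀ x ∈ s, f x = w) → divDiff f s = 0 := by
  induction k with
  | zero =>
    intro f s hs hf
    obtain ⟨a, b, hab, rfl⟩ := Finset.card_eq_two.1 hs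
    rw [divDiff_rec f _ a b (by simp) (by simp) hab]
    have h1 : ({a, b} : Finset K).erase b = {a} := by
      ext x; simp; grind
    have h2 : ({a, b} : Finset K).erase a = {b} := by
      ext x; simp; grind
    rw [h1, h2]
    simp [divDiff, hf a (by simp), hf b (by simp)]
  | succ k ih =>
    intro f s hs hf
    obtain ⟨a, ha, b, hb, hab⟩ := Finset.one_lt_card.1 (by omega : 1 < s.card)
    rw [divDiff_rec f _ a b ha hb hab, ih f (s.erase b), ih f (s.erase a)]
    · simp
    · rw [Finset.card_erase_of_mem ha]; omega
    · exact fun x hx => hf x (Finset.mem_of_mem_erase hx)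
    · rw [Finset.card_erase_of_mem hb]; omega
    · exact fun x hx => hf x (Finset.mem_of_mem_erase hx)

end field

section padic
variable {p : ℕ} [Fact p.Prime]

noncomputable local instance padicDecEq : DecidableEq ℚ_[p] := Classical.decEq _

lemma image_succAbove {k : ℕ} (x : Fin (k + 2) → ℚ_[p]) (hx : Function.Injective x)
    (j : Fin (k + 2)) :
    (Finset.univ.image fun i => x (j.succAbove i)) = (Finset.univ.image x).erase (x j) := by
  ext y
  simp only [Finset.mem_image, Finset.mem_univ, true_and, Finset.mem_erase]
  constructor
  · rintro ⟨i, rfl⟩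
    exact ⟨fun h => Fin.succAbove_ne j i (hx h), _, rfl⟩
  · rintro ⟨h, i, rfl⟩
    have : i ≠ j := fun e => h (by rw [e])
    obtain ⟨z, rfl⟩ := Fin.exists_succAbove_eq this
    exact ⟨z, rfl⟩

lemma diffQuotient_eq (f : ℚ_[p] → ℚ_[p]) (k : ℕ) : ∀ x : Fin (k + 1) → ℚ_[p],
    Function.Injective x → diffQuotient p k f x = divDiff f (Finset.univ.image x) := by
  induction k with
  | zero => intro x hx; simp [diffQuotient, divDiff]
  | succ k ih =>
    intro x hx
    have hc : ∀ j : Fin (k + 2), Function.Injective fun l => x (j.succAbove l) :=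
      fun j => hx.comp Fin.succAbove_right_injective
    rw [diffQuotient, ih _ (hc 1), ih _ (hc 0), image_succAbove x hx, image_succAbove x hx,
      divDiff_rec f (Finset.univ.image x) (x 0) (x 1) (by simp) (by simp) (hx.ne (by simp))]

lemma diffQuotient_succ (f : ℚ_[p] → ℚ_[p]) (k : ℕ) (x : Fin (k + 2) → ℚ_[p])
    (hx : Function.Injective x) (i j : Fin (k + 2)) (hij : i ≠ j) :
    diffQuotient p (k + 1) f x = (diffQuotient p k f (fun l => x (j.succAbove l)) -
      diffQuotient p k f (fun l => x (i.succAbove l))) / (x i - x j) := by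
  have hc : ∀ j : Fin (k + 2), Function.Injective fun l => x (j.succAbove l) :=
    fun j => hx.comp Fin.succAbove_right_injective
  rw [diffQuotient_eq f _ x hx, diffQuotient_eq f _ _ (hc j), diffQuotient_eq f _ _ (hc i), image_succAbove x hx,
      image_succAbove x hx,
      divDiff_rec f _ (x i) (x j) (by simp) (by simp) (hx.ne hij)]

lemma limits_of_diag (f : ℚ_[p] → ℚ_[p]) (r : ℕ)
    (h : ∀ k ≤ r, ∀ a : ℚ_[p], ∃ L, Tendsto (diffQuotient p k f)
      (𝓝[{x | Function.Injective x}] (fun _ => a)) (𝓝 L)) :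
    ∀ k ≤ r, ∀ a : Fin (k + 1) → ℚ_[p], ∃ L, Tendsto (diffQuotient p k f)
      (𝓝[{x | Function.Injective x}] a) (𝓝 L) := by
  intro k
  induction k with
  | zero =>
    intro hk a
    have : a = fun _ => a 0 := by ext i; rw [Fin.fin_one_eq_zero i]
    rw [this]; exact h 0 hk _
  | succ k ih =>
    intro hk a
    by_cases hc : ∃ i j, a i ≠ a j
    · obtain ⟨i, j, hij⟩ := hc
      have key : ∀ j : Fin (k + 2), Tendsto (fun (x : Fin (k + 2) → ℚ_[p]) l => x (j.succAbove l))
          (𝓝[{x | Function.Injective x}] a)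
          (𝓝[{x | Function.Injective x}] (fun l => a (j.succAbove l))) := by
        intro j
        refine tendsto_nhdsWithin_iff.2 ⟨?_, ?_⟩
        · refine Tendsto.mono_left ?_ nhdsWithin_le_nhds
          exact Continuous.tendsto (by fun_prop) a
        · filter_upwards [self_mem_nhdsWithin] with x hx
          exact Function.Injective.comp hx Fin.succAbove_right_injective
      obtain ⟨L1, h1⟩ := ih (by omega) (fun l => a (j.succAbove l))
      obtain ⟨L2, h2⟩ := ih (by omega) (fun l => a (i.succAbove l))
      have h3 : Tendsto (fun x : Fin (k + 2) → ℚ_[p] => x i - x j)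
          (𝓝[{x | Function.Injective x}] a) (𝓝 (a i - a j)) :=
        Tendsto.mono_left (Continuous.tendsto (by fun_prop) a) nhdsWithin_le_nhds
      refine ⟨_, Tendsto.congr' ?_ (((h1.comp (key j)).sub (h2.comp (key i))).div h3
        (sub_ne_zero.2 hij))⟩
      filter_upwards [self_mem_nhdsWithin] with x hx
      rw [diffQuotient_succ f k x hx i j (fun e => hij (by rw [e]))]
      rfl
    · push Not at hc
      have : a = fun _ => a 0 := by ext i; exact hc i 0
      rw [this]; exact h _ hk _

lemma dense_injective (n : ℕ) : Dense {x : Fin n → ℚ_[p] | Function.Injective x} := by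
  have e : {x : Fin n → ℚ_[p] | Function.Injective x} =
      ⋂ ij : {ij : Fin n × Fin n // ij.1 ≠ ij.2}, {x | x ij.1.1 ≠ x ij.1.2} := by
    ext x
    simp only [Set.mem_ofPred_eq, Set.mem_iInter]
    constructor
    · intro h ij; exact h.ne ij.2
    · intro h i j hij
      by_contra hne
      exact h ⟨(i, j), hne⟩ hij
  rw [e]
  refine dense_iInter_of_isOpen ?_ ?_
  · intro ij
    exact isOpen_ne_fun (by fun_prop) (by fun_prop)
  · rintro ⟨⟨i, j⟩, hij⟩
    simp only at hij
    intro x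
    by_cases hx : x i = x j
    · have ht : Tendsto (fun t : ℚ_[p] => Function.update x i (x i + t)) (𝓝[≠] 0) (𝓝 x) := by
        refine Tendsto.mono_left ?_ nhdsWithin_le_nhds
        have : Continuous (fun t : ℚ_[p] => Function.update x i (x i + t)) := by fun_prop
        convert this.tendsto 0 using 2
        simp
      refine mem_closure_of_tendsto ht ?_
      filter_upwards [self_mem_nhdsWithin] with t ht
      have : t ≠ 0 := ht
      simp [Function.update_of_ne hij.symm, hx, this]
    · exact subset_closure hx

lemma exists_ext (f : ℚ_[p] → ℚ_[p]) (r : ℕ)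
    (h : ∀ k ≤ r, ∀ a : ℚ_[p], ∃ L, Tendsto (diffQuotient p k f)
      (𝓝[{x | Function.Injective x}] (fun _ => a)) (𝓝 L)) :
    ∃ F : (Fin (r + 1) → ℚ_[p]) → ℚ_[p], Continuous F ∧
      ∀ x : Fin (r + 1) → ℚ_[p], Function.Injective x → F x = diffQuotient p r f x := by
  have hl := limits_of_diag f r h r le_rfl
  refine ⟨extendFrom {x | Function.Injective x} (diffQuotient p r f),
    continuous_extendFrom (dense_injective _) hl, ?_⟩
  intro x hx
  obtain ⟨L, hL⟩ := hl x
  have e : extendFrom {x | Function.Injective x} (diffQuotient p r f) x = L :=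
    extendFrom_eq (dense_injective _ x) hL
  have : diffQuotient p r f x = L := by
    refine tendsto_nhds_unique (f := fun _ : ℕ => diffQuotient p r f x) (l := atTop)
      tendsto_const_nhds ?_
    refine hL.comp (tendsto_nhdsWithin_iff.2 ⟨tendsto_const_nhds (x := x), ?_⟩)
    exact Eventually.of_forall fun _ => hx
  rw [e, this]

/-- Main estimate. -/
lemma divDiff_bound (f : ℚ_[p] → ℚ_[p]) (c : ℚ_[p]) (C : ℝ) (hC : 0 ≤ C) (N : ℕ) (k : ℕ) :
    ∀ (s : Finset ℚ_[p]) (ρ : ℝ), k ≤ N → s.card = k + 1 →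
    (∀ x ∈ s, ‖f x‖ ≤ C * ‖x - c‖ ^ N) →
    (∀ x ∈ s, ∀ y ∈ s, ‖x - c‖ = ‖y - c‖ → f x = f y) →
    (∀ x ∈ s, ‖x - c‖ ≤ ρ) → ‖divDiff f s‖ ≤ C * ρ ^ (N - k) := by
  induction k with
  | zero =>
    intro s ρ hk hs hb hf hρ
    obtain ⟨a, rfl⟩ := Finset.card_eq_one.1 hs
    have := hb a (by simp)
    have h2 := hρ a (by simp)
    simp only [divDiff, Finset.sum_singleton, Finset.erase_singleton, Finset.prod_empty, mul_one,
      Nat.sub_zero]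
    refine this.trans ?_
    gcongr
  | succ k ih =>
    intro s ρ' hk hs hb hf hρ'
    obtain ⟨m, hm, hmax⟩ := Finset.exists_max_image s (fun x => ‖x - c‖)
      (Finset.card_pos.1 (by omega))
    have hmρ := hρ' m hm
    refine le_trans ?_ (?_ : C * ‖m - c‖ ^ (N - (k + 1)) ≤ _)
    swap
    · gcongr
    set ρ := ‖m - c‖ with hρd
    by_cases hex : ∃ a ∈ s, ∃ b ∈ s, a ≠ b ∧ ρ ≤ ‖a - b‖
    · obtain ⟨a, ha, b, hb', hab, hle⟩ := hex
      have aux : ∀ d ∈ s, ‖divDiff f (s.erase d)‖ ≤ C * ρ ^ (N - k) := by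
        intro d hd
        refine ih _ ρ (by omega) (by rw [Finset.card_erase_of_mem hd]; omega) ?_ ?_ ?_
        · exact fun x hx => hb x (Finset.mem_of_mem_erase hx)
        · exact fun x hx y hy => hf x (Finset.mem_of_mem_erase hx) y (Finset.mem_of_mem_erase hy)
        · exact fun x hx => hmax x (Finset.mem_of_mem_erase hx)
      have hpos : 0 < ρ := by
        rcases (norm_nonneg (m - c)).lt_or_eq with h | h
        · exact h
        · exfalso
          have h1 := hmax a ha
          have h2 := hmax b hb'
          rw [← hρd] at h
          rw [← h] at h1 h2
          simp only [norm_le_zero_iff, sub_eq_zero] at h1 h2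
          exact hab (h1.trans h2.symm)
      rw [divDiff_rec f s a b ha hb' hab, norm_div, div_le_iff₀ (hpos.trans_le hle)]
      have h1 : ‖divDiff f (s.erase b) - divDiff f (s.erase a)‖ ≤ C * ρ ^ (N - k) := by
        rw [sub_eq_add_neg]
        refine (Padic.nonarchimedean _ _).trans ?_
        rw [norm_neg]
        exact max_le (aux b hb') (aux a ha)
      refine h1.trans ?_
      have : N - k = (N - (k + 1)) + 1 := by omega
      rw [this, pow_succ, ← mul_assoc]
      gcongr
    · push Not at hex
      have hz : divDiff f s = 0 := by
        refine divDiff_const (f m) k f s hs fun x hx => hf x hx m hm ?_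
        by_cases hxm : x = m
        · rw [hxm]
        have := hex x hx m hm hxm
        by_contra hne
        have h3 := Padic.add_eq_max_of_ne (q := x - c) (r := -(m - c)) (by rwa [norm_neg])
        have h4 : x - c + -(m - c) = x - m := by ring
        rw [h4, norm_neg] at h3
        have := le_max_right ‖x - c‖ ‖m - c‖
        linarith
      rw [hz, norm_zero]
      positivity

/-- The basic function on spheres: `g x` depends only on `‖x‖` and has norm `‖x‖ ^ N`. -/
lemma exists_sphere_fun (N : ℕ) : ∃ g : ℚ_[p] → ℚ_[p],
    (∀ x, ‖g x‖ = ‖x‖ ^ N) ∧ ∀ x y, ‖x‖ = ‖y‖ → g x = g y := by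
  classical
  have hc : ∀ t : ℝ, ∃ z : ℚ_[p], ∀ x : ℚ_[p], ‖x‖ = t → ‖z‖ = t ^ N := by
    intro t
    by_cases h : ∃ x : ℚ_[p], ‖x‖ = t
    · obtain ⟨x, hx⟩ := h
      exact ⟨x ^ N, fun y hy => by rw [norm_pow, hx]⟩
    · exact ⟨0, fun x hx => absurd ⟨x, hx⟩ h⟩
  choose z hz using hc
  exact ⟨fun x => z ‖x‖, fun x => hz _ x rfl, fun x y h => by simp only [h]⟩

/-- Index, constant on unit balls. -/
lemma exists_idx : ∃ idx : ℚ_[p] → ℕ, (∀ x y, ‖x - y‖ ≤ 1 → idx x = idx y) ∧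
    ∀ m : ℕ, idx ((p : ℚ_[p]) ^ (-(m : ℤ))) = m := by
  refine ⟨fun x => (-x.valuation).toNat, ?_, ?_⟩
  · have key : ∀ x : ℚ_[p], ‖x‖ ≤ 1 → (-x.valuation).toNat = 0 := by
      intro x hx
      have := (Padic.norm_le_one_iff_val_nonneg x).1 hx
      omega
    intro x y h
    by_cases hn : ‖x‖ = ‖y‖
    · by_cases hx : x = 0
      · subst hx
        have : y = 0 := by simpa using hn.symm
        rw [this]
      have hy : y ≠ 0 := by rintro rfl; simp [hx] at hn
      rw [Padic.norm_eq_zpow_neg_valuation hx, Padic.norm_eq_zpow_neg_valuation hy] at hn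
      have hp : (1 : ℝ) < p := by exact_mod_cast (Fact.out : p.Prime).one_lt
      have := zpow_right_injective₀ (by positivity) hp.ne' hn
      simp only at this ⊢
      rw [this]
    · have h3 := Padic.add_eq_max_of_ne (q := x) (r := -y) (by rwa [norm_neg])
      rw [← sub_eq_add_neg, norm_neg] at h3
      rw [h3, max_le_iff] at h
      simp only
      rw [key x h.1, key y h.2]
  · intro m
    simp [Padic.valuation_zpow]

lemma mk_padic_fun : Cardinal.mk (ℕ → ℚ_[p]) = Cardinal.continuum := by
  apply le_antisymm
  · have h1 : Cardinal.mk ℚ_[p] ≤ Cardinal.continuum := by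
      have h2 : Cardinal.mk (PadicSeq p) ≤ Cardinal.continuum := by
        have := Cardinal.mk_subtype_le (α := ℕ → ℚ) (fun f => IsCauSeq (padicNorm p) f)
        refine le_trans this ?_
        simp
      exact le_trans (Cardinal.mk_quotient_le) h2
    rw [Cardinal.mk_arrow]
    simp only [Cardinal.lift_id, Cardinal.lift_uzero, Cardinal.mk_nat]
    calc _ ≤ Cardinal.continuum ^ Cardinal.aleph0 := Cardinal.power_le_power_right h1
      _ = _ := by simp
  · have : Cardinal.mk (ℕ → Bool) = Cardinal.continuum := by simp
    rw [← this]
    refine Cardinal.mk_le_of_injective (f := fun s n => if s n then (1 : ℚ_[p]) else 0) ?_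
    intro s t h
    ext n
    have := congrFun h n
    simp only at this
    cases hs : s n <;> cases ht : t n <;> simp_all

lemma diag_limit (f : ℚ_[p] → ℚ_[p]) (r : ℕ) (a c : ℚ_[p]) (C : ℝ) (hC : 0 ≤ C)
    (h1 : ∀ x, ‖x - a‖ ≤ 1 → ‖f x‖ ≤ C * ‖x - c‖ ^ (r + 1))
    (h2 : ∀ x y, ‖x - a‖ ≤ 1 → ‖y - a‖ ≤ 1 → ‖x - c‖ = ‖y - c‖ → f x = f y)
    (k : ℕ) (hk : k ≤ r) : ∃ L, Tendsto (diffQuotient p k f)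
      (𝓝[{x | Function.Injective x}] (fun _ => a)) (𝓝 L) := by
  have near : ∀ δ > 0, ∀ᶠ x : Fin (k + 1) → ℚ_[p] in
      𝓝[{x | Function.Injective x}] (fun _ => a), Function.Injective x ∧ ∀ i, ‖x i - a‖ < δ := by
    intro δ hδ
    refine Filter.inter_mem self_mem_nhdsWithin (mem_nhdsWithin_of_mem_nhds ?_)
    filter_upwards [Metric.ball_mem_nhds (fun _ => a) hδ] with x hx i
    rw [← dist_eq_norm]
    exact (dist_le_pi_dist x (fun _ => a) i).trans_lt hx
  by_cases hac : a = c
  · subst hac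
    refine ⟨0, ?_⟩
    rw [Metric.tendsto_nhds]
    intro ε hε
    have hlim : Tendsto (fun ρ : ℝ => C * ρ ^ (r + 1 - k)) (𝓝[>] 0) (𝓝 0) := by
      refine Tendsto.mono_left ?_ nhdsWithin_le_nhds
      have : Continuous (fun ρ : ℝ => C * ρ ^ (r + 1 - k)) := by fun_prop
      convert this.tendsto 0 using 2
      rw [zero_pow (by omega), mul_zero]
    obtain ⟨ρ, hρε, hρ⟩ := ((hlim.eventually (gt_mem_nhds hε)).and self_mem_nhdsWithin).exists
    have hρ : 0 < ρ := hρ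
    filter_upwards [near (min ρ 1) (by positivity)] with x ⟨hx, hxa⟩
    rw [dist_zero_right, diffQuotient_eq f k x hx]
    refine lt_of_le_of_lt (divDiff_bound f a C hC (r + 1) k _ ρ (by omega) ?_ ?_ ?_ ?_) hρε
    · rw [Finset.card_image_of_injective _ hx]; simp
    · simp only [Finset.mem_image, Finset.mem_univ, true_and, forall_exists_index,
        forall_apply_eq_imp_iff]
      exact fun i => h1 _ ((hxa i).le.trans (min_le_right _ _))
    · simp only [Finset.mem_image, Finset.mem_univ, true_and, forall_exists_index,
        forall_apply_eq_imp_iff]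
      exact fun i j => h2 _ _ ((hxa i).le.trans (min_le_right _ _))
        ((hxa j).le.trans (min_le_right _ _))
    · simp only [Finset.mem_image, Finset.mem_univ, true_and, forall_exists_index,
        forall_apply_eq_imp_iff]
      exact fun i => ((hxa i).le.trans (min_le_left _ _))
  · have hpos : 0 < ‖a - c‖ := norm_pos_iff.2 (sub_ne_zero.2 hac)
    have hconst : ∀ x, ‖x - a‖ < min ‖a - c‖ 1 → f x = f a := by
      intro x hx
      refine h2 x a (hx.le.trans (min_le_right _ _)) (by simp) ?_
      have h3 := Padic.add_eq_max_of_ne (q := x - a) (r := a - c)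
        (hx.trans_le (min_le_left _ _)).ne
      rw [sub_add_sub_cancel] at h3
      rw [h3, max_eq_right (hx.le.trans (min_le_left _ _))]
    rcases k with _ | k
    · refine ⟨f a, tendsto_const_nhds.congr' ?_⟩
      filter_upwards [near (min ‖a - c‖ 1) (by positivity)] with x ⟨hx, hxa⟩
      exact (hconst _ (hxa 0)).symm
    · refine ⟨0, tendsto_const_nhds.congr' ?_⟩
      filter_upwards [near (min ‖a - c‖ 1) (by positivity)] with x ⟨hx, hxa⟩
      rw [diffQuotient_eq f _ x hx, divDiff_const (f a) k]
      · rw [Finset.card_image_of_injective _ hx]; simp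
      · simp only [Finset.mem_image, Finset.mem_univ, true_and, forall_exists_index,
          forall_apply_eq_imp_iff]
        exact fun i => hconst _ (hxa i)

lemma norm_unit (i : ℕ) : ‖(1 + (p : ℚ_[p]) ^ (i + 1))‖ = 1 := by
  have hlt : ‖(p : ℚ_[p]) ^ (i + 1)‖ < 1 := by
    rw [norm_pow]; exact pow_lt_one₀ (norm_nonneg _) Padic.norm_p_lt_one (by omega)
  rw [Padic.add_eq_max_of_ne (by rw [norm_one]; exact hlt.ne'), norm_one,
    max_eq_left hlt.le]

lemma unit_inj : Function.Injective fun i : ℕ => (1 + (p : ℚ_[p]) ^ (i + 1)) := by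
  intro i j h
  have h : (p : ℚ_[p]) ^ (i + 1) = (p : ℚ_[p]) ^ (j + 1) := by simpa using h
  have h2 : p ^ (i + 1) = p ^ (j + 1) := by exact_mod_cast h
  have := Nat.pow_right_injective (Fact.out : p.Prime).two_le h2
  omega

lemma not_ext (f : ℚ_[p] → ℚ_[p]) (r : ℕ) (c : ℚ_[p]) (C : ℝ) (hC : 0 < C)
    (h1 : ∀ x, ‖x - c‖ ≤ 1 → ‖f x‖ = C * ‖x - c‖ ^ (r + 1))
    (h2 : ∀ x y, ‖x - c‖ ≤ 1 → ‖y - c‖ ≤ 1 → ‖x - c‖ = ‖y - c‖ → f x = f y) :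
    ¬ (∃ G : (Fin (r + 2) → ℚ_[p]) → ℚ_[p], Continuous G ∧
            ∀ x : Fin (r + 2) → ℚ_[p], Function.Injective x →
              G x = diffQuotient p (r + 1) f x) := by
  rintro ⟨G, hG, hGx⟩
  have hp0 : (p : ℚ_[p]) ≠ 0 := by exact_mod_cast (Fact.out : p.Prime).ne_zero
  have hp1 : ‖(p : ℚ_[p])‖ < 1 := Padic.norm_p_lt_one
  have hpp : 0 < ‖(p : ℚ_[p])‖ := norm_pos_iff.2 hp0
  have hpn : Tendsto (fun n : ℕ => (p : ℚ_[p]) ^ n) atTop (𝓝 0) :=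
    tendsto_pow_atTop_nhds_zero_of_norm_lt_one hp1
  let u : ℕ → ℚ_[p] := fun i => 1 + (p : ℚ_[p]) ^ (i + 1)
  have hu : ∀ i, ‖u i‖ = 1 := norm_unit
  have hui : Function.Injective u := unit_inj
  -- first sequence
  let X : ℕ → Fin (r + 2) → ℚ_[p] := fun n i => c + p ^ n * u i
  have hXi : ∀ n, Function.Injective (X n) := by
    intro n i j h
    have : u i = u j := by simpa [X, hp0] using h
    exact Fin.ext (hui this)
  have hXlim : Tendsto X atTop (𝓝 (fun _ => c)) := by
    rw [tendsto_pi_nhds]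
    intro i
    simpa [X] using tendsto_const_nhds.add (hpn.mul_const (u i))
  have hXn : ∀ n i, ‖X n i - c‖ = ‖(p : ℚ_[p])‖ ^ n := by
    intro n i; simp [X, hu]
  have hple : ∀ n : ℕ, ‖(p : ℚ_[p])‖ ^ n ≤ 1 := fun n => pow_le_one₀ hpp.le hp1.le
  have hX0 : ∀ n, G (X n) = 0 := by
    intro n
    rw [hGx _ (hXi n), diffQuotient_eq f _ _ (hXi n), divDiff_const (f (X n 0)) r]
    · rw [Finset.card_image_of_injective _ (hXi n)]; simp
    · simp only [Finset.mem_image, Finset.mem_univ, true_and, forall_exists_index,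
        forall_apply_eq_imp_iff]
      intro i
      refine h2 _ _ ?_ ?_ ?_ <;> simp only [hXn] <;> exact hple n
  have hG0 : G (fun _ => c) = 0 := by
    refine tendsto_nhds_unique ((hG.tendsto _).comp hXlim) ?_
    refine tendsto_const_nhds.congr fun n => ?_
    simp [hX0]
  -- second sequence
  let Y : ℕ → Fin (r + 2) → ℚ_[p] := fun n =>
    Fin.cons (c + p ^ n) (fun i : Fin (r + 1) => c + p ^ (n + 1) * u i)
  have hY0 : ∀ n, ‖Y n 0 - c‖ = ‖(p : ℚ_[p])‖ ^ n := by
    intro n; simp [Y]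
  have hYs : ∀ n (i : Fin (r + 1)), ‖Y n i.succ - c‖ = ‖(p : ℚ_[p])‖ ^ (n + 1) := by
    intro n i
    have : Y n i.succ - c = p ^ (n + 1) * u i := by simp [Y]
    rw [this, norm_mul, hu, mul_one, norm_pow]
  have hlt : ∀ n, ‖(p : ℚ_[p])‖ ^ (n + 1) < ‖(p : ℚ_[p])‖ ^ n := fun n =>
    pow_lt_pow_right_of_lt_one₀ hpp hp1 (by omega)
  have hYi : ∀ n, Function.Injective (Y n) := by
    intro n
    refine Fin.cons_injective_iff.2 ⟨?_, ?_⟩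
    · rintro ⟨i, hi⟩
      have a1 := hYs n i
      have a2 := hY0 n
      have : Y n i.succ = Y n 0 := hi
      rw [this, a2] at a1
      exact (hlt n).ne' a1
    · intro i j h
      have : u i = u j := by simpa [hp0] using h
      exact Fin.ext (hui this)
  have hYlim : Tendsto Y atTop (𝓝 (fun _ => c)) := by
    rw [tendsto_pi_nhds]
    intro i
    refine Fin.cases ?_ (fun i => ?_) i
    · simpa [Y] using tendsto_const_nhds.add hpn
    · simpa [Y] using tendsto_const_nhds.add
        (((tendsto_add_atTop_iff_nat 1).2 hpn).mul_const (u i))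
  have hYC : ∀ n, ‖G (Y n)‖ = C := by
    intro n
    rw [hGx _ (hYi n), diffQuotient_eq f _ _ (hYi n)]
    set s := Finset.univ.image (Y n) with hs
    set w := f (Y n (Fin.succ 0)) with hw
    have hcard : s.card = r + 2 := by
      rw [Finset.card_image_of_injective _ (hYi n)]; simp
    have hc0 : divDiff (fun _ => w) s = 0 := divDiff_const w r _ s hcard (by simp)
    have hsub : divDiff f s = divDiff (fun x => f x - w) s := by
      have : divDiff (fun x => f x - w) s = divDiff f s - divDiff (fun _ => w) s := by
        simp [divDiff, sub_mul]
      rw [this, hc0, sub_zero]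
    have hmem : Y n 0 ∈ s := by simp [hs]
    have hother : ∀ x ∈ s.erase (Y n 0), ‖x - c‖ = ‖(p : ℚ_[p])‖ ^ (n + 1) := by
      intro x hx
      obtain ⟨hx0, hx⟩ := Finset.mem_erase.1 hx
      obtain ⟨i, -, rfl⟩ := Finset.mem_image.1 hx
      have : i ≠ 0 := fun e => hx0 (by rw [e])
      obtain ⟨j, rfl⟩ := Fin.exists_succ_eq.2 this
      exact hYs n j
    have hval : divDiff (fun x => f x - w) s =
        (f (Y n 0) - w) * ∏ b ∈ s.erase (Y n 0), (Y n 0 - b)⁻¹ := by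
      rw [divDiff, ← Finset.add_sum_erase s _ hmem, add_eq_left]
      refine Finset.sum_eq_zero fun x hx => ?_
      have : f x = w := by
        refine h2 _ _ ?_ ?_ ?_
        · rw [hother x hx]; exact hple _
        · rw [hYs]; exact hple _
        · rw [hother x hx, hYs]
      rw [this, sub_self, zero_mul]
    have hprod : ‖∏ b ∈ s.erase (Y n 0), (Y n 0 - b)⁻¹‖ = ((‖(p : ℚ_[p])‖ ^ n)⁻¹) ^ (r + 1) := by
      rw [norm_prod]
      rw [Finset.prod_congr rfl (g := fun _ => (‖(p : ℚ_[p])‖ ^ n)⁻¹), Finset.prod_const,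
        Finset.card_erase_of_mem hmem, hcard]
      · rfl
      · intro x hx
        have h3 := Padic.add_eq_max_of_ne (q := Y n 0 - c) (r := -(x - c))
          (by rw [norm_neg, hY0, hother x hx]; exact (hlt n).ne')
        rw [norm_neg, hY0, hother x hx, max_eq_left (hlt n).le] at h3
        rw [norm_inv, ← h3]
        congr 2
        ring
    have hfw : ‖f (Y n 0) - w‖ = C * (‖(p : ℚ_[p])‖ ^ n) ^ (r + 1) := by
      have e1 : ‖f (Y n 0)‖ = C * (‖(p : ℚ_[p])‖ ^ n) ^ (r + 1) := by
        rw [h1 _ (by rw [hY0]; exact hple _), hY0]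
      have e2 : ‖w‖ = C * (‖(p : ℚ_[p])‖ ^ (n + 1)) ^ (r + 1) := by
        rw [hw, h1 _ (by rw [hYs]; exact hple _), hYs]
      have hl : ‖w‖ < ‖f (Y n 0)‖ := by
        rw [e1, e2]
        have := pow_lt_pow_left₀ (hlt n) (by positivity) (Nat.succ_ne_zero r)
        exact mul_lt_mul_of_pos_left this hC
      have h3 := Padic.add_eq_max_of_ne (q := f (Y n 0)) (r := -w)
        (by rw [norm_neg]; exact hl.ne')
      rw [norm_neg, ← sub_eq_add_neg, max_eq_left hl.le] at h3
      rw [h3, e1]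
    rw [hsub, hval, norm_mul, hfw, hprod, mul_assoc, ← mul_pow,
      mul_inv_cancel₀ (by positivity), one_pow, mul_one]
  have : ‖G (fun _ => c)‖ = C := by
    refine tendsto_nhds_unique ((hG.tendsto _).comp hYlim).norm ?_
    refine tendsto_const_nhds.congr fun n => ?_
    simp [hYC]
  rw [hG0, norm_zero] at this
  exact hC.ne this

end padic

/-- For `r ≥ 1`, the set of functions `ℚ_[p] → ℚ_[p]` that are strictly
differentiable of order `r` but not of order `r+1` on `ℚ_[p]` is `𝔠`-lineable. -/
theorem stmt_1 (p : ℕ) [Fact p.Prime] (r : ℕ) (hr : 1 ≤ r) :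
    ∃ M : Submodule ℚ_[p] (ℚ_[p] → ℚ_[p]),
      Module.rank ℚ_[p] M = Cardinal.continuum ∧
      ∀ f ∈ (M : Set (ℚ_[p] → ℚ_[p])), f ≠ 0 →
        (∃ F : (Fin (r + 1) → ℚ_[p]) → ℚ_[p], Continuous F ∧
            ∀ x : Fin (r + 1) → ℚ_[p], Function.Injective x →
              F x = diffQuotient p r f x) ∧
        ¬ (∃ G : (Fin (r + 2) → ℚ_[p]) → ℚ_[p], Continuous G ∧
            ∀ x : Fin (r + 2) → ℚ_[p], Function.Injective x →
              G x = diffQuotient p (r + 1) f x) := by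
  obtain ⟨g, hg1, hg2⟩ := exists_sphere_fun (p := p) (r + 1)
  obtain ⟨idx, hi1, hi2⟩ := exists_idx (p := p)
  let c : ℕ → ℚ_[p] := fun m => (p : ℚ_[p]) ^ (-(m : ℤ))
  let T : (ℕ → ℚ_[p]) →ₗ[ℚ_[p]] (ℚ_[p] → ℚ_[p]) :=
    { toFun := fun τ x => τ (idx x) * g (x - c (idx x))
      map_add' := by intro a b; ext x; simp [add_mul]
      map_smul' := by intro a b; ext x; simp [mul_assoc] }
  have hT : ∀ τ x, T τ x = τ (idx x) * g (x - c (idx x)) := fun _ _ => rfl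
  have hloc : ∀ τ a x, ‖x - a‖ ≤ 1 → T τ x = τ (idx a) * g (x - c (idx a)) := by
    intro τ a x h
    rw [hT, hi1 x a h]
  have hinj : Function.Injective T := by
    rw [← LinearMap.ker_eq_bot, LinearMap.ker_eq_bot']
    intro τ hτ
    ext m
    have h := congrFun hτ (c m + 1)
    rw [hloc τ (c m) _ (by simp), hi2] at h
    have hne : g (c m + 1 - c m) ≠ 0 := by
      rw [← norm_ne_zero_iff, hg1]; simp
    exact (mul_eq_zero.1 h).resolve_right hne
  refine ⟨LinearMap.range T, ?_, ?_⟩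
  · rw [← (LinearEquiv.ofInjective T hinj).rank_eq, rank_fun_infinite, mk_padic_fun]
  · rintro f ⟨τ, rfl⟩ hf
    constructor
    · refine exists_ext _ r fun k hk a => ?_
      refine diag_limit _ r a (c (idx a)) ‖τ (idx a)‖ (norm_nonneg _) ?_ ?_ k hk
      · intro x hx
        rw [hloc τ a x hx, norm_mul, hg1]
      · intro x y hx hy h
        rw [hloc τ a x hx, hloc τ a y hy, hg2 _ _ h]
    · have : ∃ m, τ m ≠ 0 := by
        by_contra h
        push Not at h
        apply hf
        have : τ = 0 := funext h
        rw [this, map_zero]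
      obtain ⟨m, hm⟩ := this
      have hl : ∀ x, ‖x - c m‖ ≤ 1 → T τ x = τ m * g (x - c m) := by
        intro x hx
        rw [hloc τ (c m) x hx, hi2]
      refine not_ext _ r (c m) ‖τ m‖ (norm_pos_iff.2 hm) ?_ ?_
      · intro x hx
        rw [hl x hx, norm_mul, hg1]
      · intro x y hx hy h
        rw [hl x hx, hl y hy, hg2 _ _ h]
end

section
/- Let p be a prime and let 𝕂 be a complete nontrivially normed field whose norm is ultrametric (‖x + y‖ ≤ max(‖x‖, ‖y‖) for all x, y ∈ 𝕂) and which is a normed ℚ_p-algebra satisfying ‖algebraMap ℚ_p 𝕂 x‖ = ‖x‖ for all x ∈ ℚ_p. Let N¹(ℤ_p, 𝕂) be the set of functions f : ℤ_p → 𝕂 that are strictly differentiable on ℤ_p with identically zero derivative, i.e., for every a ∈ ℤ_p the quotient (f x - f y)/algebraMap ℚ_p 𝕂 ((x : ℚ_p) - (y : ℚ_p)) tends to 0 as (x,y) → (a,a) within {(x,y) ∈ ℤ_p × ℤ_p : x ≠ y}. For α > 0 let Lip_α(ℤ_p, 𝕂) be the set of f : ℤ_p → 𝕂 for which there exists M >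 0 with ‖f x - f y‖ ≤ M·‖x - y‖^α for all x, y ∈ ℤ_p (real exponentiation of the norm). Then the set N¹(ℤ_p, 𝕂) \ ⋃_{α > 1} Lip_α(ℤ_p, 𝕂) is 𝔠-lineable in the 𝕂-vector space of all functions ℤ_p → 𝕂: there exists a 𝕂-submodule M of the space of functions ℤ_p → 𝕂 whose rank over 𝕂 equals the cardinality 𝔠 of the continuum and such that M \ {0} is contained in this set. -/
open Filter Topology

lemma exists_ad : ∃ A : Set ℕ → Set ℕ, (∀ s, (A s).Infinite) ∧
    ∀ s t, s ≠ t → (A s ∩ A t).Finite := by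
  classical
  let e : Set ℕ → ℕ → ℕ := fun s n =>
    Encodable.encode ((n, (Finset.range n).filter (· ∈ s)) : ℕ × Finset ℕ)
  have he : ∀ s t n m, e s n = e t m → n = m ∧
      (Finset.range n).filter (· ∈ s) = (Finset.range m).filter (· ∈ t) := by
    intro s t n m h
    exact Prod.ext_iff.1 (Encodable.encode_injective h)
  refine ⟨fun s => Set.range (e s), fun s => ?_, fun s t hst => ?_⟩
  · exact Set.infinite_range_of_injective fun n m h => (he s s n m h).1
  · obtain ⟨i, hi⟩ : ∃ i, ¬ (i ∈ s ↔ i ∈ t) := by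
      by_contra! h
      exact hst (Set.ext h)
    refine ((Set.finite_Iic i).image (e s)).subset ?_
    rintro _ ⟨⟨n, rfl⟩, ⟨m, hm⟩⟩
    refine ⟨n, ?_, rfl⟩
    obtain ⟨rfl, h⟩ := he _ _ _ _ hm
    by_contra hn
    simp only [Set.mem_Iic, not_le] at hn
    have := Finset.ext_iff.1 h i
    simp [hn] at this
    exact hi this.symm

open Classical in
/-- The basic function attached to a set of valuations. -/
noncomputable def FF (p : ℕ) [Fact p.Prime] (𝕂 : Type) [NontriviallyNormedField 𝕂]
    [NormedAlgebra ℚ_[p] 𝕂] (S : Set ℕ) (x : ℤ_[p]) : 𝕂 :=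
  if x = 0 then 0 else if x.valuation ∈ S then
    algebraMap ℚ_[p] 𝕂 ((p : ℚ_[p]) ^ (x.valuation + Nat.log p x.valuation)) else 0

section
variable (p : ℕ) [Fact p.Prime] (𝕂 : Type) [NontriviallyNormedField 𝕂]
    [NormedAlgebra ℚ_[p] 𝕂]

lemma FF_norm_eq (S : Set ℕ) (x y : ℤ_[p]) (h : ‖x‖ = ‖y‖) : FF p 𝕂 S x = FF p 𝕂 S y := by
  have hp := (Fact.out : p.Prime)
  by_cases hx : x = 0
  · subst hx
    have : y = 0 := by simpa using h.symm
    rw [this]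
  · have hy : y ≠ 0 := by
      rintro rfl
      exact hx (by simpa using h)
    have hv : x.valuation = y.valuation := by
      rw [PadicInt.norm_eq_zpow_neg_valuation hx, PadicInt.norm_eq_zpow_neg_valuation hy] at h
      have := zpow_right_injective₀ (a := (p : ℝ)) (by exact_mod_cast hp.pos)
        (by exact_mod_cast hp.one_lt.ne') h
      simpa using this
    unfold FF
    rw [if_neg hx, if_neg hy]
    by_cases hS : y.valuation ∈ S
    · rw [if_pos hS, if_pos (hv ▸ hS), hv]
    · rw [if_neg hS, if_neg (hv ▸ hS)]

lemma FF_small (hiso : ∀ x : ℚ_[p], ‖algebraMap ℚ_[p] 𝕂 x‖ = ‖x‖) (S : Set ℕ)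
    (ε : ℝ) (hε : 0 < ε) : ∃ δ > 0, ∀ x : ℤ_[p], ‖x‖ < δ → ‖FF p 𝕂 S x‖ ≤ ε * ‖x‖ := by
  have hp := (Fact.out : p.Prime)
  have hp1 : (1 : ℝ) < p := by exact_mod_cast hp.one_lt
  have hp0 : (0 : ℝ) < p := by linarith
  obtain ⟨k, hk⟩ := exists_pow_lt_of_lt_one hε (inv_lt_one_of_one_lt₀ hp1)
  refine ⟨(p : ℝ) ^ (-((p ^ k : ℕ) : ℤ)), by positivity, fun x hx => ?_⟩
  unfold FF
  split_ifs with h0 h1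
  · simp; positivity
  · rw [hiso, norm_pow, Padic.norm_p, pow_add, mul_comm]
    rw [PadicInt.norm_eq_zpow_neg_valuation h0] at hx ⊢
    rw [zpow_neg, zpow_natCast, inv_pow _ x.valuation]
    gcongr
    have hv := (zpow_lt_zpow_iff_right₀ hp1).1 hx
    have hv' : p ^ k ≤ x.valuation := by omega
    have : k ≤ Nat.log p x.valuation := (Nat.le_log_iff_pow_le hp.one_lt (by
      have := pow_pos hp.pos k; omega)).2 hv'
    exact (pow_le_pow_of_le_one (by positivity) (inv_lt_one_of_one_lt₀ hp1).le this).trans hk.le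
  · simp; positivity

lemma FF_tendsto (hultra : ∀ x y : 𝕂, ‖x + y‖ ≤ max ‖x‖ ‖y‖)
    (hiso : ∀ x : ℚ_[p], ‖algebraMap ℚ_[p] 𝕂 x‖ = ‖x‖) (S : Set ℕ) (a : ℤ_[p]) :
    Tendsto (fun q : ℤ_[p] × ℤ_[p] =>
        (FF p 𝕂 S q.1 - FF p 𝕂 S q.2) /
          algebraMap ℚ_[p] 𝕂 ((q.1 : ℚ_[p]) - (q.2 : ℚ_[p])))
      (nhdsWithin (a, a) {q : ℤ_[p] × ℤ_[p] | q.1 ≠ q.2}) (nhds 0) := by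
  have key : ∀ δ > 0, ∀ᶠ q : ℤ_[p] × ℤ_[p] in
      nhdsWithin (a, a) {q : ℤ_[p] × ℤ_[p] | q.1 ≠ q.2}, ‖q.1 - a‖ < δ ∧ ‖q.2 - a‖ < δ := by
    intro δ hδ
    refine nhdsWithin_le_nhds ?_
    have := Metric.ball_mem_nhds ((a, a) : ℤ_[p] × ℤ_[p]) hδ
    filter_upwards [this] with q hq
    rw [← dist_eq_norm, ← dist_eq_norm]
    simpa [Prod.dist_eq] using hq
  by_cases ha : a = 0
  · subst ha
    rw [NormedAddGroup.tendsto_nhds_zero]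
    intro ε hε
    obtain ⟨δ, hδ, h⟩ := FF_small p 𝕂 hiso S (ε / 2) (by positivity)
    filter_upwards [key δ hδ, self_mem_nhdsWithin] with q hq hne
    simp only [sub_zero] at hq
    have hne' : q.1 ≠ q.2 := hne
    have hpos : 0 < ‖q.1 - q.2‖ := norm_pos_iff.2 (sub_ne_zero.2 hne')
    have hcoe : ‖(q.1 : ℚ_[p]) - (q.2 : ℚ_[p])‖ = ‖q.1 - q.2‖ := by
      rw [← PadicInt.coe_sub, PadicInt.padic_norm_e_of_padicInt]
    rw [norm_div, hiso, hcoe]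
    by_cases hn : ‖q.1‖ = ‖q.2‖
    · rw [FF_norm_eq p 𝕂 S _ _ hn]; simpa using hε
    · have hm : ‖q.1 - q.2‖ = max ‖q.1‖ ‖q.2‖ := by
        rw [sub_eq_add_neg, PadicInt.norm_add_eq_max_of_ne (by simpa using hn), norm_neg]
      have h1 := hultra (FF p 𝕂 S q.1) (- FF p 𝕂 S q.2)
      rw [← sub_eq_add_neg, norm_neg] at h1
      have h2 : ‖FF p 𝕂 S q.1 - FF p 𝕂 S q.2‖ ≤ ε / 2 * ‖q.1 - q.2‖ := by
        refine h1.trans (max_le ((h _ hq.1).trans ?_) ((h _ hq.2).trans ?_))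
        · gcongr; rw [hm]; exact le_max_left _ _
        · gcongr; rw [hm]; exact le_max_right _ _
      rw [div_lt_iff₀ hpos]
      nlinarith
  · refine tendsto_const_nhds.congr' ?_
    filter_upwards [key ‖a‖ (norm_pos_iff.2 ha)] with q hq
    have : ∀ x : ℤ_[p], ‖x - a‖ < ‖a‖ → ‖x‖ = ‖a‖ := by
      intro x hx
      have := PadicInt.norm_add_eq_max_of_ne hx.ne
      rw [sub_add_cancel] at this
      rw [this, max_eq_right hx.le]
    rw [FF_norm_eq p 𝕂 S q.1 q.2 ((this _ hq.1).trans (this _ hq.2).symm)]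
    simp

lemma FF_pow (S : Set ℕ) (n : ℕ) [Decidable (n ∈ S)] : FF p 𝕂 S ((p : ℤ_[p]) ^ n) =
    if n ∈ S then algebraMap ℚ_[p] 𝕂 ((p : ℚ_[p]) ^ (n + Nat.log p n)) else 0 := by
  have hp := (Fact.out : p.Prime)
  have : (p : ℤ_[p]) ≠ 0 := by exact_mod_cast hp.ne_zero
  simp [FF, this, PadicInt.valuation_pow, PadicInt.valuation_p]

lemma comb_pow (A : Set ℕ → Set ℕ) (hA : ∀ s, (A s).Infinite)
    (hA2 : ∀ s t, s ≠ t → (A s ∩ A t).Finite) (c : Set ℕ →₀ 𝕂) (s : Set ℕ) :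
    ∃ᶠ n in atTop, Finsupp.linearCombination 𝕂 (fun s => FF p 𝕂 (A s)) c ((p : ℤ_[p]) ^ n)
      = c s * algebraMap ℚ_[p] 𝕂 ((p : ℚ_[p]) ^ (n + Nat.log p n)) := by
  classical
  have h1 : ∃ᶠ n in atTop, n ∈ A s := Nat.frequently_atTop_iff_infinite.2 (hA s)
  have h2 : ∀ᶠ n in atTop, ∀ t ∈ c.support, t ≠ s → n ∉ A s ∩ A t := by
    rw [Finset.eventually_all]
    intro t _
    by_cases hts : t = s
    · simp [hts]
    · have := (hA2 s t (Ne.symm hts)).eventually_cofinite_notMem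
      rw [Nat.cofinite_eq_atTop] at this
      filter_upwards [this] with n hn _ using hn
  refine (h1.and_eventually h2).mono ?_
  rintro n ⟨hn, hn2⟩
  rw [Finsupp.linearCombination_apply, Finsupp.sum, Finset.sum_apply]
  rw [Finset.sum_eq_single s]
  · rw [Pi.smul_apply, FF_pow, if_pos hn, smul_eq_mul]
  · intro t ht hts
    rw [Pi.smul_apply, FF_pow, if_neg, smul_zero]
    exact fun h => hn2 t ht hts ⟨hn, h⟩
  · intro h
    simp [Finsupp.notMem_support_iff.1 h]

end


/-- For a complete nontrivially normed field `𝕂` with ultrametric norm which is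
a normed `ℚ_[p]`-algebra with isometric algebra map, the set
`N¹(ℤ_[p], 𝕂) \ ⋃_{α > 1} Lip_α(ℤ_[p], 𝕂)` is `𝔠`-lineable (as a `𝕂`-vector space). -/
theorem stmt_2 (p : ℕ) [Fact p.Prime] (𝕂 : Type) [NontriviallyNormedField 𝕂]
    [CompleteSpace 𝕂] [NormedAlgebra ℚ_[p] 𝕂]
    (hultra : ∀ x y : 𝕂, ‖x + y‖ ≤ max ‖x‖ ‖y‖)
    (hiso : ∀ x : ℚ_[p], ‖algebraMap ℚ_[p] 𝕂 x‖ = ‖x‖) :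
    ∃ M : Submodule 𝕂 (ℤ_[p] → 𝕂),
      Module.rank 𝕂 M = Cardinal.continuum ∧
      ∀ f ∈ (M : Set (ℤ_[p] → 𝕂)), f ≠ 0 →
        (∀ a : ℤ_[p],
          Filter.Tendsto
            (fun q : ℤ_[p] × ℤ_[p] =>
              (f q.1 - f q.2) / algebraMap ℚ_[p] 𝕂 ((q.1 : ℚ_[p]) - (q.2 : ℚ_[p])))
            (nhdsWithin (a, a) {q : ℤ_[p] × ℤ_[p] | q.1 ≠ q.2}) (nhds 0)) ∧
        ∀ α : ℝ, 1 < α →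
          ¬ ∃ C : ℝ, 0 < C ∧ ∀ x y : ℤ_[p], ‖f x - f y‖ ≤ C * ‖x - y‖ ^ α := by
  classical
  have hp := (Fact.out : p.Prime)
  have hp1 : (1 : ℝ) < p := by exact_mod_cast hp.one_lt
  have hp0 : (0 : ℝ) < p := by linarith
  have hpq : (p : ℚ_[p]) ≠ 0 := by exact_mod_cast hp.ne_zero
  obtain ⟨A, hA, hA2⟩ := exists_ad
  let v : Set ℕ → (ℤ_[p] → 𝕂) := fun s => FF p 𝕂 (A s)
  have hli : LinearIndependent 𝕂 v := by
    rw [linearIndependent_iff]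
    intro c hc
    ext s
    obtain ⟨n, hn⟩ := (comb_pow p 𝕂 A hA hA2 c s).exists
    rw [show Finsupp.linearCombination 𝕂 (fun s => FF p 𝕂 (A s)) c = 0 from hc] at hn
    refine (mul_eq_zero.1 hn.symm).resolve_right fun h => ?_
    exact pow_ne_zero _ hpq ((map_eq_zero (algebraMap ℚ_[p] 𝕂)).1 h)
  refine ⟨Submodule.span 𝕂 (Set.range v), ?_, ?_⟩
  · rw [rank_span hli, Cardinal.mk_range_eq _ hli.injective]
    simp
  · intro f hf hf0
    refine ⟨fun a => ?_, ?_⟩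
    · have hf' : f ∈ Submodule.span 𝕂 (Set.range v) := hf
      clear hf0 hf
      induction hf' using Submodule.span_induction with
      | mem x hx =>
        obtain ⟨s, rfl⟩ := hx
        exact FF_tendsto p 𝕂 hultra hiso (A s) a
      | zero =>
        refine tendsto_const_nhds.congr fun q => ?_
        simp
      | add x y _ _ hx hy =>
        have := hx.add hy
        rw [add_zero] at this
        refine this.congr fun q => ?_
        simp only [Pi.add_apply]
        ring
      | smul r x _ hx =>
        have := hx.const_mul r
        rw [mul_zero] at this
        refine this.congr fun q => ?_
        simp only [Pi.smul_apply, smul_eq_mul]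
        ring
    · rintro α hα ⟨C, hC, h⟩
      obtain ⟨c, rfl⟩ := (Finsupp.mem_span_range_iff_exists_finsupp (R := 𝕂)).1 hf
      have hc : c ≠ 0 := by
        rintro rfl
        simp at hf0
      obtain ⟨s, hs⟩ := Finsupp.ne_iff.1 hc
      have hs : c s ≠ 0 := hs
      have hr0 : 0 < (p : ℝ) ^ (1 - α) := by positivity
      have hr1 : (p : ℝ) ^ (1 - α) < 1 := Real.rpow_lt_one_of_one_lt_of_neg hp1 (by linarith)
      have hlim : Tendsto (fun n : ℕ => C * ((n : ℝ) * ((p : ℝ) ^ (1 - α)) ^ n)) atTop (𝓝 0) := by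
        simpa using (tendsto_self_mul_const_pow_of_lt_one hr0.le hr1).const_mul C
      have hev := hlim.eventually_lt_const (norm_pos_iff.2 hs)
      obtain ⟨n, hn, hlt, hn1⟩ := ((comb_pow p 𝕂 A hA hA2 c s).and_eventually
        (hev.and (eventually_ge_atTop 1))).exists
      have hx := h ((p : ℤ_[p]) ^ n) 0
      change ‖Finsupp.linearCombination 𝕂 (fun s => FF p 𝕂 (A s)) c ((p : ℤ_[p]) ^ n)
        - Finsupp.linearCombination 𝕂 (fun s => FF p 𝕂 (A s)) c 0‖ ≤ _ at hx
      have hz : Finsupp.linearCombination 𝕂 (fun s => FF p 𝕂 (A s)) c 0 = 0 := by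
        rw [Finsupp.linearCombination_apply, Finsupp.sum, Finset.sum_apply]
        exact Finset.sum_eq_zero fun t _ => by simp [FF]
      rw [hz, hn, sub_zero, sub_zero, norm_mul, hiso, norm_pow, norm_pow, Padic.norm_p,
        PadicInt.norm_p, pow_add] at hx
      have e1 : (((p : ℝ)⁻¹) ^ n) ^ α = ((p : ℝ)⁻¹) ^ n * ((p : ℝ) ^ (1 - α)) ^ n := by
        rw [← Real.rpow_natCast, ← Real.rpow_natCast, Real.inv_rpow hp0.le,
          Real.inv_rpow (by positivity), ← Real.rpow_mul hp0.le, ← Real.rpow_mul hp0.le,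
          ← Real.rpow_neg hp0.le, ← Real.rpow_neg hp0.le, ← Real.rpow_add hp0]
        congr 1; ring
      rw [e1] at hx
      have hL : ((p : ℝ) ^ Nat.log p n) ≤ n := by
        exact_mod_cast Nat.pow_log_le_self p (by omega)
      have hq : 0 < ((p : ℝ)⁻¹) ^ n := by positivity
      have hx2 : ‖c s‖ * ((p : ℝ)⁻¹) ^ Nat.log p n ≤ C * ((p : ℝ) ^ (1 - α)) ^ n := by
        refine le_of_mul_le_mul_left ?_ hq
        linarith
      rw [inv_pow, ← div_eq_mul_inv, div_le_iff₀ (by positivity)] at hx2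
      have : C * ((p : ℝ) ^ (1 - α)) ^ n * (p : ℝ) ^ Nat.log p n ≤
          C * ((p : ℝ) ^ (1 - α)) ^ n * n := by gcongr
      linarith
end

section
/- Let p be a prime. The set A of all functions f : ℚ_p → ℚ_p such that f is differentiable at every point of ℚ_p and the derivative function x ↦ deriv f x is unbounded (for every C > 0 there exists x ∈ ℚ_p with ‖deriv f x‖ > C) is strongly 𝔠-algebrable in the commutative ℚ_p-algebra of all functions ℚ_p → ℚ_p under pointwise operations: there exists a set B of functions ℚ_p → ℚ_p with cardinality 𝔠 (the continuum) such that for every n ≥ 1, every injective map e : Fin n → B, and every polynomial P ∈ MvPolynomial (Fin n) ℚ_p with P ≠ 0 and constant coefficient 0, the function obtained by evaluating P at the functions e(0), …, e(n−1) (pointwise) belongs to A. -/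
open Filter Topology

namespace PadicAlg

/-- trace of a set on an initial segment -/
noncomputable def tr (N : ℕ) (b : Set ℕ) : Finset ℕ := by
  classical exact (Finset.range N).filter (· ∈ b)

abbrev Code := ℕ × ℕ × (Finset ℕ →₀ ℕ)

noncomputable instance : Encodable Code := Encodable.ofCountable _

/-- independent family of functions -/
noncomputable def F (b : Set ℕ) (k : ℕ) : ℕ :=
  match (Encodable.decode k : Option Code) with
  | none => 0
  | some c => c.2.2 (tr c.2.1 b)

lemma F_encode (b : Set ℕ) (c : Code) : F b (Encodable.encode c) = c.2.2 (tr c.2.1 b) := by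
  simp [F]

lemma exists_sep {n : ℕ} (b : Fin n → Set ℕ) (hb : Function.Injective b) :
    ∃ N, Function.Injective (fun i => tr N (b i)) := by
  have : ∀ᶠ N in atTop, ∀ i j, tr N (b i) = tr N (b j) → i = j := by
    rw [eventually_all]; intro i
    rw [eventually_all]; intro j
    by_cases hij : i = j
    · exact Eventually.of_forall fun _ _ => hij
    · have hne : b i ≠ b j := fun h => hij (hb h)
      obtain ⟨m, hm⟩ : ∃ m, ¬ (m ∈ b i ↔ m ∈ b j) := by
        by_contra! h
        exact hne (Set.ext h)
      filter_upwards [eventually_gt_atTop m] with N hN h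
      exfalso; apply hm
      have := Finset.ext_iff.1 h m
      simpa [tr, hN] using this
  obtain ⟨N, hN⟩ := this.exists
  exact ⟨N, fun i j h => hN i j h⟩

lemma F_indep {n : ℕ} (b : Fin n → Set ℕ) (hb : Function.Injective b) (v : Fin n → ℕ) :
    ∃ᶠ k in atTop, ∀ i, F (b i) k = v i := by
  obtain ⟨N, hN⟩ := exists_sep b hb
  let g : Finset ℕ →₀ ℕ := Finsupp.embDomain ⟨_, hN⟩ (Finsupp.equivFunOnFinite.symm v)
  have hg : ∀ i, g (tr N (b i)) = v i := fun i =>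
    (Finsupp.embDomain_apply_self ⟨_, hN⟩ (Finsupp.equivFunOnFinite.symm v) i)
  rw [Nat.frequently_atTop_iff_infinite]
  refine Set.infinite_of_injective_forall_mem
    (f := fun M : ℕ => Encodable.encode ((M, N, g) : Code)) ?_ ?_
  · intro M M' h
    have := Encodable.encode_injective h
    exact congrArg Prod.fst this
  · intro M i
    rw [F_encode]; exact hg i

variable {p : ℕ} [Fact p.Prime]

noncomputable def idx (x : ℚ_[p]) : ℕ := Nat.log p ⌊‖x‖⌋₊

lemma idx_loc (x : ℚ_[p]) : ∀ᶠ y in 𝓝 x, idx y = idx x := by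
  by_cases hx : x = 0
  · subst hx
    filter_upwards [Metric.ball_mem_nhds (0 : ℚ_[p]) one_pos] with y hy
    have : ⌊‖y‖⌋₊ = 0 := Nat.floor_eq_zero.2 (by simpa using hy)
    simp [idx, this]
  · filter_upwards [Metric.ball_mem_nhds x (norm_pos_iff.2 hx)] with y hy
    rw [Metric.mem_ball, dist_eq_norm] at hy
    rw [idx, idx, Padic.norm_eq_of_norm_sub_lt_right hy]

/-- The point of norm `p ^ k`. -/
noncomputable def pt (p : ℕ) [Fact p.Prime] (k : ℕ) : ℚ_[p] := ((p : ℚ_[p]) ^ k)⁻¹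

lemma norm_pt (k : ℕ) : ‖pt p k‖ = (p : ℝ) ^ k := by
  simp [pt]

lemma idx_pt (k : ℕ) : idx (pt p k) = k := by
  rw [idx, norm_pt, ← Nat.cast_pow, Nat.floor_natCast,
    Nat.log_pow (Fact.out : p.Prime).one_lt]

noncomputable def fn (p : ℕ) [Fact p.Prime] (b : Set ℕ) (x : ℚ_[p]) : ℚ_[p] :=
  (F b (idx x) : ℚ_[p]) * x ^ 2

lemma pt_ne (k : ℕ) : pt p k ≠ 0 := by
  have := (Fact.out : p.Prime).ne_zero
  simp [pt, this]

lemma fn_inj : Function.Injective (fn p) := by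
  intro a b h
  by_contra hab
  have hb : Function.Injective ![a, b] := by
    intro i j; fin_cases i <;> fin_cases j <;> simp [hab, Ne.symm hab]
  obtain ⟨k, hk⟩ := (F_indep ![a, b] hb ![0, 1]).exists
  have h0 := hk 0
  have h1 := hk 1
  simp at h0 h1
  have := congrFun h (pt p k)
  simp [fn, idx_pt, h0, h1] at this
  exact pow_ne_zero 2 (pt_ne k) this.symm

/-- the one variable polynomial `P (v X²)` -/
noncomputable def rp {n : ℕ} (P : MvPolynomial (Fin n) ℚ_[p]) (v : Fin n → ℕ) :
    Polynomial ℚ_[p] :=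
  MvPolynomial.aeval (fun i => Polynomial.C (v i : ℚ_[p]) * Polynomial.X) P

lemma rp_eval {n : ℕ} (P : MvPolynomial (Fin n) ℚ_[p]) (v : Fin n → ℕ) (y : ℚ_[p]) :
    (rp P v).eval y = MvPolynomial.eval (fun i => (v i : ℚ_[p]) * y) P := by
  rw [rp, ← Polynomial.coe_aeval_eq_eval, ← AlgHom.comp_apply, MvPolynomial.comp_aeval]
  simp [MvPolynomial.aeval_eq_eval]

lemma hasDeriv {n : ℕ} (P : MvPolynomial (Fin n) ℚ_[p]) (b : Fin n → Set ℕ) (x : ℚ_[p]) :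
    HasDerivAt (fun y => MvPolynomial.eval (fun i => fn p (b i) y) P)
      ((((rp P (fun i => F (b i) (idx x))).comp (Polynomial.X ^ 2)).derivative).eval x) x := by
  refine (Polynomial.hasDerivAt _ x).congr_of_eventuallyEq ?_
  filter_upwards [idx_loc x] with y hy
  simp [rp_eval, fn, hy]

lemma exists_val {n : ℕ} (P : MvPolynomial (Fin n) ℚ_[p]) (hP : P ≠ 0) :
    ∃ v : Fin n → ℕ, MvPolynomial.eval (fun i => (v i : ℚ_[p])) P ≠ 0 := by
  by_contra! h
  apply hP
  refine MvPolynomial.funext_set (fun _ => Set.range (Nat.cast : ℕ → ℚ_[p]))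
    (fun _ => Set.infinite_range_of_injective Nat.cast_injective) ?_
  intro x hx
  choose v hv using fun i => hx i (Set.mem_univ i)
  have : x = fun i => (v i : ℚ_[p]) := funext fun i => (hv i).symm
  rw [this, h v, map_zero]

lemma deg_pos {n : ℕ} (P : MvPolynomial (Fin n) ℚ_[p]) (h0 : MvPolynomial.coeff 0 P = 0)
    (v : Fin n → ℕ) (hv : MvPolynomial.eval (fun i => (v i : ℚ_[p])) P ≠ 0) :
    0 < (((rp P v).comp (Polynomial.X ^ 2)).derivative).degree := by
  rw [← Polynomial.natDegree_pos_iff_degree_pos, Polynomial.natDegree_derivative,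
    Polynomial.natDegree_comp, Polynomial.natDegree_X_pow]
  have : (rp P v).natDegree ≠ 0 := by
    intro h
    rw [Polynomial.natDegree_eq_zero] at h
    obtain ⟨c, hc⟩ := h
    have e0 := rp_eval P v 0
    have e1 := rp_eval P v 1
    rw [← hc] at e0 e1
    simp only [Polynomial.eval_C, mul_zero, mul_one] at e0 e1
    apply hv
    rw [← e1, e0]
    have : (fun _ : Fin n => (0 : ℚ_[p])) = 0 := rfl
    rw [this, MvPolynomial.eval_zero, MvPolynomial.constantCoeff_eq, h0]
  omega

end PadicAlg

open PadicAlg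

/-- The set of everywhere differentiable functions `ℚ_[p] → ℚ_[p]` with
unbounded derivative is strongly `𝔠`-algebrable in the algebra of all functions
`ℚ_[p] → ℚ_[p]` with pointwise operations. -/
theorem stmt_3 (p : ℕ) [Fact p.Prime] :
    ∃ B : Set (ℚ_[p] → ℚ_[p]), Cardinal.mk B = Cardinal.continuum ∧
      ∀ n : ℕ, 1 ≤ n → ∀ e : Fin n → (ℚ_[p] → ℚ_[p]), Function.Injective e →
        (∀ i, e i ∈ B) →
        ∀ P : MvPolynomial (Fin n) ℚ_[p], P ≠ 0 → MvPolynomial.coeff 0 P = 0 →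
          (∀ x : ℚ_[p],
            DifferentiableAt ℚ_[p] (fun y => MvPolynomial.eval (fun i => e i y) P) x) ∧
          ∀ C : ℝ, 0 < C → ∃ x : ℚ_[p],
            C < ‖deriv (fun y => MvPolynomial.eval (fun i => e i y) P) x‖ := by
  refine ⟨Set.range (fn p), ?_, ?_⟩
  · rw [Cardinal.mk_range_eq _ fn_inj, Cardinal.mk_set_nat]
  intro n _ e he hB P hP h0
  choose b hb using hB
  have hbi : Function.Injective b := by
    intro i j h
    apply he
    rw [← hb i, ← hb j, h]
  obtain rfl : (fun i => fn p (b i)) = e := funext hb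
  refine ⟨fun x => (hasDeriv P b x).differentiableAt, fun C _ => ?_⟩
  obtain ⟨v, hv⟩ := exists_val P hP
  have ht : Tendsto (fun k => ‖pt p k‖) atTop atTop := by
    simp only [norm_pt]
    exact tendsto_pow_atTop_atTop_of_one_lt
      (by exact_mod_cast (Fact.out : p.Prime).one_lt)
  have hT := Polynomial.tendsto_norm_atTop _ (deg_pos P h0 v hv) ht
  obtain ⟨k, hk, hkC⟩ := ((F_indep b hbi v).and_eventually (hT.eventually_gt_atTop C)).exists
  refine ⟨pt p k, ?_⟩
  rw [(hasDeriv P b (pt p k)).deriv, idx_pt, funext hk]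
  exact hkC
end

section
/- Let p be a prime. The set A of all functions f : ℚ_p → ℚ_p such that (1) f is continuous on ℚ_p, (2) f is differentiable at every point x ≠ 0, (3) f is not differentiable at 0, (4) the derivative of f is bounded on ℚ_p \ {0} (there exists C with ‖deriv f x‖ ≤ C for all x ≠ 0), and (5) for every real α > 0, f is not Lipschitz of order α (there is no M > 0 with ‖f x - f y‖ ≤ M·‖x - y‖^α for all x, y ∈ ℚ_p), is 𝔠-lineable in the ℚ_p-vector space of all functions ℚ_p → ℚ_p: there exists a ℚ_p-submodule M of the space of functions ℚ_p → ℚ_p whose rank over ℚ_p equals the cardinality 𝔠 of the continuum and such that M \ {0} ⊆ A. -/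
open Filter Topology

open Classical in
/-- The sequence-to-function map: `a` is sent to `x ↦ a_j p^(log_p n)`, `n = v(x)`, `n = ⟨j, m⟩`. -/
noncomputable def seqMap (p : ℕ) [Fact p.Prime] : (ℕ → ℚ_[p]) →ₗ[ℚ_[p]] (ℚ_[p] → ℚ_[p]) where
  toFun a x := if x = 0 then 0 else
    a (Nat.unpair x.valuation.toNat).1 * (p : ℚ_[p]) ^ (Nat.log p x.valuation.toNat)
  map_add' a b := by
    ext x
    by_cases hx : x = 0 <;> simp [hx, add_mul]
  map_smul' c a := by
    ext x
    by_cases hx : x = 0 <;> simp [hx, mul_assoc]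

/-- Bounded sequences. -/
def bddSeq (p : ℕ) [Fact p.Prime] : Submodule ℚ_[p] (ℕ → ℚ_[p]) where
  carrier := {a | ∃ C : ℝ, ∀ n, ‖a n‖ ≤ C}
  zero_mem' := ⟨0, by simp⟩
  add_mem' := by
    rintro a b ⟨C, hC⟩ ⟨D, hD⟩
    exact ⟨C + D, fun n => (norm_add_le _ _).trans (add_le_add (hC n) (hD n))⟩
  smul_mem' := by
    rintro c a ⟨C, hC⟩
    refine ⟨‖c‖ * C, fun n => ?_⟩
    simp only [Pi.smul_apply, smul_eq_mul, norm_mul]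
    exact mul_le_mul_of_nonneg_left (hC n) (norm_nonneg _)

lemma card_padic_le (p : ℕ) [Fact p.Prime] : Cardinal.mk ℚ_[p] ≤ Cardinal.continuum := by
  have h1 : Cardinal.mk ℚ_[p] ≤ Cardinal.mk (PadicSeq p) := Cardinal.mk_quotient_le
  have h2 : Cardinal.mk (PadicSeq p) ≤ Cardinal.mk (ℕ → ℚ) := Cardinal.mk_subtype_le _
  refine h1.trans (h2.trans ?_)
  simp

lemma rank_bddSeq (p : ℕ) [Fact p.Prime] :
    Module.rank ℚ_[p] (bddSeq p) = Cardinal.continuum := by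
  apply le_antisymm
  · refine (rank_le_card _ _).trans ((Cardinal.mk_subtype_le _).trans ?_)
    rw [← Cardinal.power_def, Cardinal.mk_nat, ← Cardinal.continuum_power_aleph0]
    exact Cardinal.power_le_power_right (card_padic_le p)
  · let S : Set ℚ_[p] := Metric.ball 0 1
    have hS : Cardinal.continuum ≤ Cardinal.mk S :=
      continuum_le_cardinal_of_isOpen ℚ_[p] Metric.isOpen_ball
        ⟨0, Metric.mem_ball_self one_pos⟩
    let F : S → bddSeq p := fun l => ⟨fun n => (l : ℚ_[p]) ^ n, 1, fun n => by
      have : ‖(l : ℚ_[p])‖ < 1 := mem_ball_zero_iff.1 l.2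
      rw [norm_pow]
      exact pow_le_one₀ (norm_nonneg _) this.le⟩
    have hF : LinearIndependent ℚ_[p] F := by
      apply LinearIndependent.of_comp (bddSeq p).subtype
      have h0 := (linearIndependent_monoidHom (Multiplicative ℕ) ℚ_[p]).comp
        (fun l : S => powersHom ℚ_[p] (l : ℚ_[p]))
        ((powersHom ℚ_[p]).injective.comp Subtype.val_injective)
      exact h0
    exact hS.trans hF.cardinal_le_rank

section
variable {p : ℕ} [Fact p.Prime]

lemma seqMap_ne {a : ℕ → ℚ_[p]} {x : ℚ_[p]} (hx : x ≠ 0) : seqMap p a x =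
    a (Nat.unpair x.valuation.toNat).1 * (p : ℚ_[p]) ^ (Nat.log p x.valuation.toNat) := by
  simp [seqMap, hx]

lemma seqMap_zero (a : ℕ → ℚ_[p]) : seqMap p a 0 = 0 := by
  simp [seqMap]

lemma seqMap_pow (a : ℕ → ℚ_[p]) (j m : ℕ) : seqMap p a ((p : ℚ_[p]) ^ (Nat.pair j m)) =
    a j * (p : ℚ_[p]) ^ (Nat.log p (Nat.pair j m)) := by
  have hp : (p : ℚ_[p]) ≠ 0 := by exact_mod_cast (Fact.out : p.Prime).ne_zero
  rw [seqMap_ne (pow_ne_zero _ hp)]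
  simp

lemma seqMap_locConst (a : ℕ → ℚ_[p]) {x : ℚ_[p]} (hx : x ≠ 0) :
    seqMap p a =ᶠ[𝓝 x] fun _ => seqMap p a x := by
  have : ∀ᶠ y in 𝓝 x, ‖y - x‖ < ‖x‖ := by
    filter_upwards [Metric.ball_mem_nhds x (norm_pos_iff.2 hx)] with y hy
    simpa [dist_eq_norm] using hy
  filter_upwards [this] with y hy
  have h := Padic.norm_eq_of_norm_sub_lt_right hy
  have hy0 : y ≠ 0 := by
    rw [← norm_ne_zero_iff, h]; exact norm_ne_zero_iff.2 hx
  have hv : y.valuation = x.valuation := by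
    rw [Padic.norm_eq_zpow_neg_valuation hx, Padic.norm_eq_zpow_neg_valuation hy0] at h
    have hp : (1 : ℝ) < p := by exact_mod_cast (Fact.out : p.Prime).one_lt
    have := zpow_right_injective₀ (by linarith) hp.ne' h
    simpa using this
  rw [seqMap_ne hx, seqMap_ne hy0, hv]

lemma seqMap_cont_zero {a : ℕ → ℚ_[p]} (ha : a ∈ bddSeq p) :
    ContinuousAt (seqMap p a) 0 := by
  obtain ⟨C, hC⟩ := ha
  have hp : (1 : ℝ) < p := by exact_mod_cast (Fact.out : p.Prime).one_lt
  have hlog : Tendsto (Nat.log p) atTop atTop := by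
    refine tendsto_atTop_atTop.2 fun b => ⟨p ^ b, fun n hn => ?_⟩
    exact Nat.le_log_of_pow_le (Fact.out : p.Prime).one_lt hn
  have ht : Tendsto (fun n => C * (‖(p : ℚ_[p])‖) ^ (Nat.log p n)) atTop (𝓝 0) := by
    have := (tendsto_pow_atTop_nhds_zero_of_lt_one (norm_nonneg (p : ℚ_[p]))
      Padic.norm_p_lt_one).comp hlog
    simpa using this.const_mul C
  rw [Metric.continuousAt_iff]
  intro ε hε
  obtain ⟨N, hN⟩ := eventually_atTop.1 (ht.eventually (gt_mem_nhds hε))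
  refine ⟨(p : ℝ) ^ (-(N : ℤ)), by positivity, fun x hx => ?_⟩
  rw [seqMap_zero, dist_zero_right]
  rw [dist_zero_right] at hx
  by_cases h0 : x = 0
  · rw [h0, seqMap_zero]; simpa using hε
  rw [Padic.norm_eq_zpow_neg_valuation h0, zpow_lt_zpow_iff_right₀ hp] at hx
  rw [seqMap_ne h0, norm_mul, norm_pow]
  refine lt_of_le_of_lt ?_ (hN x.valuation.toNat (by omega))
  exact mul_le_mul_of_nonneg_right (hC _) (by positivity)

lemma tendsto_pair (j : ℕ) : Tendsto (Nat.pair j) atTop atTop :=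
  tendsto_atTop_mono (fun m => Nat.right_le_pair j m) tendsto_id

lemma seqMap_big {a : ℕ → ℚ_[p]} {j : ℕ} (hj : a j ≠ 0) {α : ℝ} (hα : 0 < α) (M : ℝ) :
    ∀ᶠ m in atTop, M * ‖(p : ℚ_[p]) ^ (Nat.pair j m)‖ ^ α <
      ‖seqMap p a ((p : ℚ_[p]) ^ (Nat.pair j m))‖ := by
  have hp : (1 : ℝ) < p := by exact_mod_cast (Fact.out : p.Prime).one_lt
  have hn0 : 0 < ‖(p : ℚ_[p])‖ := by rw [Padic.norm_p]; positivity
  have hr : ‖(p : ℚ_[p])‖ ^ α < 1 :=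
    Real.rpow_lt_one (norm_nonneg _) Padic.norm_p_lt_one hα
  have ht := (tendsto_self_mul_const_pow_of_lt_one (by positivity) hr).const_mul M
  rw [mul_zero] at ht
  have hev := (ht.eventually (gt_mem_nhds (norm_pos_iff.2 hj))).and (eventually_gt_atTop 0)
  filter_upwards [(tendsto_pair j).eventually hev] with m hm
  rw [seqMap_pow]
  generalize Nat.pair j m = n at hm
  obtain ⟨hm, hn⟩ := hm
  have hnR : (0 : ℝ) < n := by exact_mod_cast hn
  have hge : (n : ℝ)⁻¹ ≤ ‖(p : ℚ_[p])‖ ^ (Nat.log p n) := by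
    rw [Padic.norm_p, inv_pow]
    apply inv_anti₀ (by positivity)
    exact_mod_cast Nat.pow_log_le_self p hn.ne'
  rw [norm_mul, norm_pow, norm_pow]
  have hcomm : (‖(p : ℚ_[p])‖ ^ n) ^ α = (‖(p : ℚ_[p])‖ ^ α) ^ n := by
    rw [← Real.rpow_natCast, ← Real.rpow_natCast, ← Real.rpow_mul hn0.le, ← Real.rpow_mul hn0.le,
      mul_comm]
  rw [hcomm]
  calc M * (‖(p : ℚ_[p])‖ ^ α) ^ n = (M * (n * (‖(p : ℚ_[p])‖ ^ α) ^ n)) * (n : ℝ)⁻¹ := by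
        field_simp
    _ < ‖a j‖ * (n : ℝ)⁻¹ := mul_lt_mul_of_pos_right hm (by positivity)
    _ ≤ _ := mul_le_mul_of_nonneg_left hge (norm_nonneg _)

lemma seqMap_injective : Function.Injective (seqMap p) := by
  rw [← LinearMap.ker_eq_bot, LinearMap.ker_eq_bot']
  intro a ha
  by_contra hne
  obtain ⟨j, hj⟩ := Function.ne_iff.1 hne
  obtain ⟨m, hm⟩ := (seqMap_big hj one_pos 0).exists
  simp [ha] at hm

end


/-- The set of continuous functions `ℚ_[p] → ℚ_[p]` that are differentiable
except at `0`, with bounded derivative on `ℚ_[p] \ {0}`, and not Lipschitz of any order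
`α > 0`, is `𝔠`-lineable. -/
theorem stmt_5 (p : ℕ) [Fact p.Prime] :
    ∃ M : Submodule ℚ_[p] (ℚ_[p] → ℚ_[p]),
      Module.rank ℚ_[p] M = Cardinal.continuum ∧
      ∀ f ∈ (M : Set (ℚ_[p] → ℚ_[p])), f ≠ 0 →
        Continuous f ∧
        (∀ x : ℚ_[p], x ≠ 0 → DifferentiableAt ℚ_[p] f x) ∧
        ¬ DifferentiableAt ℚ_[p] f 0 ∧
        (∃ C : ℝ, ∀ x : ℚ_[p], x ≠ 0 → ‖deriv f x‖ ≤ C) ∧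
        ∀ α : ℝ, 0 < α →
          ¬ ∃ M' : ℝ, 0 < M' ∧ ∀ x y : ℚ_[p], ‖f x - f y‖ ≤ M' * ‖x - y‖ ^ α := by
  refine ⟨(bddSeq p).map (seqMap p), ?_, ?_⟩
  · rw [← rank_bddSeq p]
    exact (Submodule.equivMapOfInjective _ seqMap_injective (bddSeq p)).rank_eq.symm
  rintro f ⟨a, ha, rfl⟩ hne
  have hd : ∀ x : ℚ_[p], x ≠ 0 → HasDerivAt (seqMap p a) 0 x := fun x hx =>
    (hasDerivAt_const x (seqMap p a x)).congr_of_eventuallyEq (seqMap_locConst a hx)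
  have ha0 : a ≠ 0 := fun h => hne (by rw [h, map_zero])
  obtain ⟨j, hj⟩ := Function.ne_iff.1 ha0
  refine ⟨?_, fun x hx => (hd x hx).differentiableAt, ?_, ⟨0, fun x hx => ?_⟩, ?_⟩
  · rw [continuous_iff_continuousAt]
    intro x
    by_cases hx : x = 0
    · rw [hx]; exact seqMap_cont_zero ha
    · exact (hd x hx).continuousAt
  · intro hdiff
    obtain ⟨C, hC⟩ := hdiff.hasFDerivAt.isBigO_sub.bound
    have ht : Tendsto (fun m => (p : ℚ_[p]) ^ (Nat.pair j m)) atTop (𝓝 0) :=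
      (tendsto_pow_atTop_nhds_zero_of_norm_lt_one Padic.norm_p_lt_one).comp (tendsto_pair j)
    obtain ⟨m, h1, h2⟩ := ((ht.eventually hC).and (seqMap_big hj one_pos C)).exists
    rw [seqMap_zero, sub_zero, sub_zero] at h1
    rw [Real.rpow_one] at h2
    linarith
  · rw [(hd x hx).deriv, norm_zero]
  · rintro α hα ⟨M, -, hM⟩
    obtain ⟨m, hm⟩ := (seqMap_big hj hα M).exists
    have := hM ((p : ℚ_[p]) ^ (Nat.pair j m)) 0
    rw [seqMap_zero, sub_zero, sub_zero] at this
    linarith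
end

section
/- Let p be a prime. There exists a function g : ℚ_p → ℚ_p, not identically zero, such that for every β ∈ ℚ_p with β ≠ 0 and every natural number k ≥ 1, the pointwise power function G = β·g^k satisfies: (1) G is continuous on ℚ_p, (2) G is differentiable at every point x ≠ 0 with deriv G x = 0, (3) G is not differentiable at 0, and (4) for every real α > 0 there is no M > 0 with ‖G x - G y‖ ≤ M·‖x - y‖^α for all x, y ∈ ℚ_p. -/
/-- The witness: `g 0 = 0`, and `g x = p ^ sqrt (v x)` otherwise. -/
noncomputable def gAux (p : ℕ) [Fact p.Prime] (x : ℚ_[p]) : ℚ_[p] :=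
  open Classical in if x = 0 then 0 else (p : ℚ_[p]) ^ (Nat.sqrt x.valuation.toNat)

theorem gAux_zero (p : ℕ) [Fact p.Prime] : gAux p 0 = 0 := by simp [gAux]

theorem gAux_pow (p : ℕ) [hp : Fact p.Prime] (j : ℕ) :
    gAux p ((p : ℚ_[p]) ^ (j * j)) = (p : ℚ_[p]) ^ j := by
  have h0 : (p : ℚ_[p]) ≠ 0 := by exact_mod_cast hp.out.ne_zero
  have : ((p : ℚ_[p]) ^ (j * j)).valuation.toNat = j * j := by
    rw [Padic.valuation_pow, Padic.valuation_p, mul_one, Int.toNat_natCast]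
  rw [gAux, if_neg (pow_ne_zero _ h0), this, Nat.sqrt_eq]

theorem gAux_eventually (p : ℕ) [hp : Fact p.Prime] (x : ℚ_[p]) (hx : x ≠ 0) :
    ∀ᶠ y in nhds x, gAux p y = gAux p x := by
  filter_upwards [Metric.ball_mem_nhds x (norm_pos_iff.2 hx)] with y hy
  rw [Metric.mem_ball, dist_eq_norm] at hy
  have hn : ‖y‖ = ‖x‖ := by
    have := IsUltrametricDist.norm_add_eq_max_of_norm_ne_norm hy.ne
    rwa [sub_add_cancel, max_eq_right hy.le] at this
  have hy0 : y ≠ 0 := by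
    rw [← norm_pos_iff, hn]; exact norm_pos_iff.2 hx
  have hv : y.valuation = x.valuation := by
    rw [Padic.norm_eq_zpow_neg_valuation hy0, Padic.norm_eq_zpow_neg_valuation hx] at hn
    have hp1 : (1 : ℝ) < p := by exact_mod_cast hp.out.one_lt
    have := zpow_right_injective₀ (by linarith) hp1.ne' hn
    simpa using this
  simp [gAux, hx, hy0, hv]

theorem gAux_continuous (p : ℕ) [hp : Fact p.Prime] : Continuous (gAux p) := by
  have hp1 : (1 : ℝ) < p := by exact_mod_cast hp.out.one_lt
  rw [continuous_iff_continuousAt]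
  intro x
  by_cases hx : x = 0
  · subst hx
    rw [Metric.continuousAt_iff]
    intro ε hε
    obtain ⟨j, hj⟩ := exists_pow_lt_of_lt_one hε (inv_lt_one_of_one_lt₀ hp1)
    refine ⟨(p : ℝ) ^ (-((j * j : ℕ) : ℤ)), by positivity, ?_⟩
    intro y hy
    rw [dist_zero_right] at hy
    rw [gAux_zero, dist_zero_right]
    by_cases hy0 : y = 0
    · simpa [hy0, gAux_zero] using hε
    rw [Padic.norm_eq_zpow_neg_valuation hy0, zpow_lt_zpow_iff_right₀ hp1] at hy
    have h1 : j * j ≤ y.valuation.toNat := by omega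
    have h2 : j ≤ Nat.sqrt y.valuation.toNat := Nat.le_sqrt.2 h1
    rw [gAux, if_neg hy0, norm_pow, Padic.norm_p]
    refine lt_of_le_of_lt ?_ hj
    exact pow_le_pow_of_le_one (by positivity) (inv_le_one_of_one_le₀ hp1.le) h2
  · exact continuousAt_const.congr ((gAux_eventually p x hx).mono fun y hy => hy.symm)

theorem gAux_growth (p : ℕ) [hp : Fact p.Prime] (β : ℚ_[p]) (hβ : β ≠ 0) (k : ℕ)
    (α : ℝ) (hα : 0 < α) (M : ℝ) :
    ∀ᶠ j : ℕ in Filter.atTop,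
      M * ‖(p : ℚ_[p]) ^ (j * j)‖ ^ α < ‖β * gAux p ((p : ℚ_[p]) ^ (j * j)) ^ k‖ := by
  have hp1 : (1 : ℝ) < p := by exact_mod_cast hp.out.one_lt
  have hp0 : (0 : ℝ) < p := by linarith
  have hb : 0 < ‖β‖ := norm_pos_iff.2 hβ
  filter_upwards [(tendsto_pow_atTop_atTop_of_one_lt hp1).eventually_gt_atTop (M / ‖β‖),
    tendsto_natCast_atTop_atTop.eventually_ge_atTop ((k + 1 : ℝ) / α)] with j h1 h2
  rw [gAux_pow, norm_mul, norm_pow, norm_pow, norm_pow, Padic.norm_p]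
  rw [div_lt_iff₀ hb] at h1
  rw [div_le_iff₀ hα] at h2
  have e1 : (((p : ℝ)⁻¹) ^ (j * j)) ^ α = (p : ℝ) ^ (-(α * j * j)) := by
    rw [← Real.rpow_natCast, ← Real.rpow_mul (by positivity), Real.inv_rpow hp0.le,
      ← Real.rpow_neg hp0.le]
    congr 1; push_cast; ring
  have e2 : (((p : ℝ)⁻¹) ^ j) ^ k = (p : ℝ) ^ (-(k * j : ℝ)) := by
    rw [← pow_mul, ← Real.rpow_natCast, Real.inv_rpow hp0.le, ← Real.rpow_neg hp0.le]
    congr 1; push_cast; ring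
  rw [e1, e2]
  rw [← Real.rpow_natCast] at h1
  have hpos : 0 < (p : ℝ) ^ (-(α * j * j)) := Real.rpow_pos_of_pos hp0 _
  calc M * (p : ℝ) ^ (-(α * j * j))
      < ((p : ℝ) ^ (j : ℝ) * ‖β‖) * (p : ℝ) ^ (-(α * j * j)) := by gcongr
    _ = ‖β‖ * (p : ℝ) ^ ((j : ℝ) + (-(α * j * j))) := by rw [Real.rpow_add hp0]; ring
    _ ≤ ‖β‖ * (p : ℝ) ^ (-(k * j : ℝ)) := by
      gcongr
      · exact hp1.le
      · have hj : (0 : ℝ) ≤ j := by positivity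
        nlinarith


/-- 1-algebrability: there exists a nonzero function `g : ℚ_[p] → ℚ_[p]`
such that every pointwise combination `β • g ^ k` (with `β ≠ 0`, `k ≥ 1`) is continuous,
differentiable with zero derivative away from `0`, not differentiable at `0`, and not
Lipschitz of any order `α > 0`. -/
theorem stmt_6 (p : ℕ) [Fact p.Prime] :
    ∃ g : ℚ_[p] → ℚ_[p], g ≠ 0 ∧
      ∀ β : ℚ_[p], β ≠ 0 → ∀ k : ℕ, 1 ≤ k →
        Continuous (fun x => β * g x ^ k) ∧
        (∀ x : ℚ_[p], x ≠ 0 → HasDerivAt (fun x => β * g x ^ k) 0 x) ∧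
        ¬ DifferentiableAt ℚ_[p] (fun x => β * g x ^ k) 0 ∧
        ∀ α : ℝ, 0 < α →
          ¬ ∃ M : ℝ, 0 < M ∧ ∀ x y : ℚ_[p],
              ‖β * g x ^ k - β * g y ^ k‖ ≤ M * ‖x - y‖ ^ α := by
  have hp : Fact p.Prime := inferInstance
  have hp1 : (1 : ℝ) < p := by exact_mod_cast hp.out.one_lt
  refine ⟨gAux p, ?_, ?_⟩
  · intro h
    have h1 := gAux_pow p 0
    simp [h] at h1
  intro β hβ k hk
  have hk0 : k ≠ 0 := by omega
  refine ⟨?_, ?_, ?_, ?_⟩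
  · exact continuous_const.mul ((gAux_continuous p).pow k)
  · intro x hx
    refine (hasDerivAt_const x (β * gAux p x ^ k)).congr_of_eventuallyEq ?_
    filter_upwards [gAux_eventually p x hx] with y hy
    rw [hy]
  · intro h
    have ht : Filter.Tendsto (fun j : ℕ => (p : ℚ_[p]) ^ (j * j)) Filter.atTop (nhds 0) := by
      have hlt : ‖(p : ℚ_[p])‖ < 1 := by
        rw [Padic.norm_p]; exact inv_lt_one_of_one_lt₀ hp1
      exact (tendsto_pow_atTop_nhds_zero_of_norm_lt_one hlt).comp
        (Filter.tendsto_atTop_mono (fun n => Nat.le_mul_self n) Filter.tendsto_id)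
    obtain ⟨C, hC⟩ := h.isBigO_sub.bound
    obtain ⟨j, h1, h2⟩ := ((ht.eventually hC).and (gAux_growth p β hβ k 1 one_pos C)).exists
    simp only [gAux_zero, zero_pow hk0, mul_zero, sub_zero] at h1
    rw [Real.rpow_one] at h2
    exact absurd h1 (not_le.2 h2)
  · rintro α hα ⟨M, -, hM⟩
    obtain ⟨j, h2⟩ := (gAux_growth p β hβ k α hα M).exists
    have h1 := hM ((p : ℚ_[p]) ^ (j * j)) 0
    simp only [gAux_zero, zero_pow hk0, mul_zero, sub_zero] at h1
    exact absurd h1 (not_le.2 h2)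
end

section
/- Let p be a prime and let μ be a nonzero additive Haar measure on ℤ_p (a translation-invariant, finite, regular Borel measure on the compact additive group ℤ_p). Say that f : ℤ_p → ℚ_p is differentiable at a ∈ ℤ_p with derivative L ∈ ℚ_p if (f x - f a)/((x : ℚ_p) - (a : ℚ_p)) tends to L as x → a within ℤ_p \ {a}. Let A be the set of all continuous functions f : ℤ_p → ℚ_p for which there exists a Borel set B ⊆ ℤ_p such that: (1) μ(ℤ_p \ B) = 0, (2) f is differentiable at every point of B, (3) the derivatives on B are uniformly bounded (there exists C such that for every a ∈ B the derivative L of f at a satisfies ‖L‖ ≤ C), (4) f is not differentiable at any point of ℤ_p \ B, and (5) the cardinality of ℤ_p \ B equals 𝔠 (the continuum). Then A is 𝔠-lineable in the ℚ_p-vector space of all functions ℤ_p → ℚ_p: there exists a ℚ_p-submodule M of the space of functions ℤ_p → ℚ_p whose rank over ℚ_p equals 𝔠 and such that M \ {0} ⊆ A. -/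
/-- `f : ℤ_[p] → ℚ_[p]` is differentiable at `a` with derivative `L` if the difference
quotient `(f x - f a) / (x - a)` tends to `L` as `x → a` within `ℤ_[p] \ {a}`. -/
def PadicIntDerivAt (p : ℕ) [Fact p.Prime] (f : ℤ_[p] → ℚ_[p]) (a : ℤ_[p]) (L : ℚ_[p]) :
    Prop :=
  Filter.Tendsto (fun x : ℤ_[p] => (f x - f a) / ((x : ℚ_[p]) - (a : ℚ_[p])))
    (nhdsWithin a {a}ᶜ) (nhds L)

open Filter Topology Cardinal

namespace CantorPadic

variable {p : ℕ} [Fact p.Prime]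

lemma appr_eq {x : ℤ_[p]} {n N : ℕ} (hN : N < p ^ n) (h : (p : ℤ_[p]) ^ n ∣ x - N) :
    x.appr n = N := by
  have h1 := Ideal.mem_span_singleton.1 (PadicInt.appr_spec n x)
  have h2 : (p : ℤ_[p]) ^ n ∣ (((x.appr n : ℤ) - (N : ℤ) : ℤ) : ℤ_[p]) := by
    have := dvd_sub h h1
    push_cast
    convert this using 1
    ring
  have h3 : ((p ^ n : ℕ) : ℤ) ∣ (x.appr n : ℤ) - (N : ℤ) := by
    have := (PadicInt.pow_p_dvd_int_iff n ((x.appr n : ℤ) - (N : ℤ))).1 h2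
    exact_mod_cast this
  have h4 : N ≡ x.appr n [MOD p ^ n] := (Nat.modEq_iff_dvd).2 h3
  exact (Nat.ModEq.eq_of_lt_of_lt h4 hN (PadicInt.appr_lt x n)).symm

lemma appr_congr {x y : ℤ_[p]} {n : ℕ} (h : (p : ℤ_[p]) ^ n ∣ x - y) :
    x.appr n = y.appr n := by
  apply appr_eq (PadicInt.appr_lt y n)
  have h1 := Ideal.mem_span_singleton.1 (PadicInt.appr_spec n y)
  have := dvd_add h h1
  convert this using 1
  ring

/-- digit `2k+1` of `x` is nonzero -/
def Hit (k : ℕ) (x : ℤ_[p]) : Prop := p ^ (2 * k + 1) ≤ x.appr (2 * k + 2)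

/-- the Cantor set -/
def C (p : ℕ) [Fact p.Prime] : Set ℤ_[p] := {x | ∀ k, ¬ Hit k x}

lemma eventually_dvd (x : ℤ_[p]) (n : ℕ) : ∀ᶠ y in 𝓝 x, (p : ℤ_[p]) ^ n ∣ y - x := by
  have hp : (0 : ℝ) < (p : ℝ) ^ (-n : ℤ) := by
    have : 0 < (p : ℝ) := by exact_mod_cast (Fact.out : p.Prime).pos
    positivity
  filter_upwards [Metric.ball_mem_nhds x hp] with y hy
  rw [← Ideal.mem_span_singleton, ← PadicInt.norm_le_pow_iff_mem_span_pow]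
  rw [Metric.mem_ball, dist_eq_norm] at hy
  exact hy.le

lemma hit_congr {x y : ℤ_[p]} {k n : ℕ} (hk : 2 * k + 2 ≤ n) (h : (p : ℤ_[p]) ^ n ∣ x - y) :
    Hit k x ↔ Hit k y := by
  unfold Hit
  rw [appr_congr ((pow_dvd_pow _ hk).trans h)]

lemma isClosed_C : IsClosed (C p) := by
  rw [← isOpen_compl_iff, isOpen_iff_mem_nhds]
  intro x hx
  simp only [C, Set.mem_compl_iff, Set.mem_ofPred_eq, not_forall, not_not] at hx
  obtain ⟨k, hk⟩ := hx
  filter_upwards [eventually_dvd x (2 * k + 2)] with y hy h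
  exact h k ((hit_congr le_rfl hy).2 hk)

/-- first odd digit nonzero -/
noncomputable def lev (x : ℤ_[p]) : ℕ := sInf {k | Hit k x}

lemma lev_hit {x : ℤ_[p]} (hx : x ∉ C p) : Hit (lev x) x := by
  simp only [C, Set.mem_ofPred_eq, not_forall, not_not] at hx
  exact Nat.sInf_mem hx

lemma lev_eq {x : ℤ_[p]} {k : ℕ} (h : Hit k x) (h' : ∀ j < k, ¬ Hit j x) : lev x = k := by
  apply le_antisymm (Nat.sInf_le (show k ∈ {k | Hit k x} from h))
  by_contra hlt
  push Not at hlt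
  exact h' _ hlt (lev_hit (fun hC => hC k h))

lemma not_hit_of_lt {x : ℤ_[p]} {j : ℕ} (h : j < lev x) : ¬ Hit j x := fun hj =>
  absurd (Nat.sInf_le (show j ∈ {k | Hit k x} from hj)) (not_le.2 h)

lemma hit_add {c : ℤ_[p]} (hc : c ∈ C p) (k : ℕ) : Hit k (c + (p : ℤ_[p]) ^ (2 * k + 1)) := by
  have hlt : c.appr (2 * k + 2) < p ^ (2 * k + 1) := not_le.1 (hc k)
  have hp := (Fact.out : p.Prime).two_le
  have : (c + (p : ℤ_[p]) ^ (2 * k + 1)).appr (2 * k + 2)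
      = c.appr (2 * k + 2) + p ^ (2 * k + 1) := by
    apply appr_eq
    · have : p ^ (2 * k + 2) = p ^ (2 * k + 1) * p := pow_succ _ _
      nlinarith
    · have h1 := Ideal.mem_span_singleton.1 (PadicInt.appr_spec (2 * k + 2) c)
      convert h1 using 1
      push_cast
      ring
  unfold Hit
  omega

lemma lev_add {c : ℤ_[p]} (hc : c ∈ C p) (k : ℕ) :
    lev (c + (p : ℤ_[p]) ^ (2 * k + 1)) = k := by
  apply lev_eq (hit_add hc k)
  intro j hj
  rw [hit_congr (y := c) (n := 2 * k + 1) (by omega) (by simp)]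
  exact hc j

lemma measure_C [MeasurableSpace ℤ_[p]] [BorelSpace ℤ_[p]]
    (μ : MeasureTheory.Measure ℤ_[p]) [MeasureTheory.IsFiniteMeasure μ]
    [μ.IsAddLeftInvariant] : μ (C p) = 0 := by
  by_contra h0
  let A : ℕ → Set ℤ_[p] := fun k => (fun x => -(p : ℤ_[p]) ^ (2 * k + 1) + x) ⁻¹' (C p)
  have hA : ∀ k, μ (A k) = μ (C p) := fun k => MeasureTheory.measure_preimage_add μ _ _
  have hlev : ∀ k, ∀ x ∈ A k, lev x = k := by
    intro k x hx
    have := lev_add hx k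
    simpa using this
  have hm : ∀ k, MeasurableSet (A k) := fun k =>
    (isClosed_C.preimage (by fun_prop)).measurableSet
  have hd : Pairwise (Function.onFun Disjoint A) := by
    intro i j hij
    rw [Function.onFun, Set.disjoint_left]
    intro x hi hj
    exact hij ((hlev i x hi).symm.trans (hlev j x hj))
  have := MeasureTheory.Measure.finite_const_le_meas_of_disjoint_iUnion μ
    (pos_iff_ne_zero.2 h0) hm hd (MeasureTheory.measure_ne_top _ _)
  simp only [hA, le_refl, Set.ofPred_true] at this
  exact Set.infinite_univ this

lemma mk_padic_le : #ℤ_[p] ≤ 𝔠 := by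
  have : Function.Injective (fun x : ℤ_[p] => x.appr) := by
    intro x y h
    rw [← PadicInt.ext_of_toZModPow]
    intro n
    have h' : x.appr n = y.appr n := congrFun h n
    change ((x.appr n : ℕ) : ZMod (p ^ n)) = ((y.appr n : ℕ) : ZMod (p ^ n))
    rw [h']
  have := Cardinal.mk_le_of_injective this
  simpa using this

/-- partial sums -/
def ps (p : ℕ) (s : ℕ → Bool) : ℕ → ℕ := fun N => ∑ k ∈ Finset.range N, (s k).toNat * p ^ (2 * k)

lemma ps_lt (s : ℕ → Bool) (N : ℕ) : ps p s (N + 1) < p ^ (2 * N + 1) := by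
  have hp := (Fact.out : p.Prime).two_le
  have hb : ∀ k, (s k).toNat ≤ 1 := fun k => Bool.toNat_le _
  induction N with
  | zero => simp [ps]; have := hb 0; omega
  | succ N ih =>
    have e : ps p s (N + 1 + 1) = ps p s (N + 1) + (s (N + 1)).toNat * p ^ (2 * (N + 1)) :=
      Finset.sum_range_succ _ _
    have e1 : p ^ (2 * (N + 1)) = p ^ (2 * N + 1) * p := by ring
    have e2 : p ^ (2 * (N + 1) + 1) = p ^ (2 * N + 1) * p * p := by ring
    have := hb (N + 1)
    have h3 : (s (N + 1)).toNat * p ^ (2 * (N + 1)) ≤ p ^ (2 * N + 1) * p := by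
      rw [e1]; exact mul_le_of_le_one_left (Nat.zero_le _) this
    rw [e, e2]
    have hq : 0 < p ^ (2 * N + 1) := by positivity
    generalize p ^ (2 * N + 1) = q at *
    have : q * 2 ≤ q * p := Nat.mul_le_mul_left _ hp
    have : q * p * 2 ≤ q * p * p := Nat.mul_le_mul_left _ hp
    omega

lemma exists_lim (s : ℕ → Bool) : ∃ x : ℤ_[p], ∀ N, (p : ℤ_[p]) ^ (2 * N) ∣ x - ps p s N := by
  have hp1 : (1 : ℝ) < p := by exact_mod_cast (Fact.out : p.Prime).one_lt
  have hs : ∀ s : ℕ → Bool,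
      Summable (fun k => (((s k).toNat : ℕ) : ℤ_[p]) * (p : ℤ_[p]) ^ (2 * k)) := by
    intro s
    apply Summable.of_norm_bounded (g := fun k : ℕ => ((p : ℝ)⁻¹) ^ k)
    · exact summable_geometric_of_lt_one (by positivity) (inv_lt_one_of_one_lt₀ hp1)
    · intro k
      rw [norm_mul, norm_pow, PadicInt.norm_p]
      calc _ ≤ 1 * ((p : ℝ)⁻¹) ^ (2 * k) := by
            gcongr; exact PadicInt.norm_le_one _
        _ ≤ _ := by
          rw [one_mul]
          exact pow_le_pow_of_le_one (by positivity) (inv_le_one_of_one_le₀ hp1.le) (by omega)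
  refine ⟨∑' k, (((s k).toNat : ℕ) : ℤ_[p]) * (p : ℤ_[p]) ^ (2 * k), fun N => ?_⟩
  rw [← (hs s).sum_add_tsum_nat_add N]
  refine ⟨∑' k, (((s (k + N)).toNat : ℕ) : ℤ_[p]) * (p : ℤ_[p]) ^ (2 * k), ?_⟩
  rw [← (hs fun k => s (k + N)).tsum_mul_left]
  simp only [ps]
  push_cast
  rw [add_sub_cancel_left]
  congr 1
  ext1 k
  ring

lemma mk_C : #(C p) = 𝔠 := by
  apply le_antisymm ((Cardinal.mk_set_le _).trans mk_padic_le)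
  choose g hg using exists_lim (p := p)
  have key : ∀ s N, (g s).appr (2 * N + 2) = ps p s (N + 1) := by
    intro s N
    apply appr_eq _ (hg s (N + 1))
    exact (ps_lt s N).trans (Nat.pow_lt_pow_right (Fact.out : p.Prime).one_lt (by omega))
  have hC : ∀ s, g s ∈ C p := by
    intro s k
    unfold Hit
    rw [key, not_le]
    exact ps_lt s k
  have hinj : Function.Injective (fun s => (⟨g s, hC s⟩ : C p)) := by
    intro s t h
    have h : g s = g t := congrArg Subtype.val h
    have hps : ∀ N, ps p s N = ps p t N := by
      intro N
      cases N with
      | zero => rfl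
      | succ N => rw [← key, ← key, h]
    funext k
    have h1 := hps (k + 1)
    have e : ∀ s, ps p s (k + 1) = ps p s k + (s k).toNat * p ^ (2 * k) :=
      fun s => Finset.sum_range_succ _ _
    rw [e, e, hps k] at h1
    have h2 := Nat.eq_of_mul_eq_mul_right (pow_pos (Fact.out : p.Prime).pos _)
      (Nat.add_left_cancel h1)
    cases hs : s k <;> cases ht : t k <;> simp_all
  have := Cardinal.mk_le_of_injective hinj
  simpa using this

lemma mk_padicInt : #ℤ_[p] = 𝔠 :=
  le_antisymm mk_padic_le (mk_C.symm.le.trans (Cardinal.mk_set_le (C p)))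

open Classical in
/-- the linear map from sequences to functions -/
noncomputable def Phi (p : ℕ) [Fact p.Prime] : (ℕ → ℚ_[p]) →ₗ[ℚ_[p]] (ℤ_[p] → ℚ_[p]) where
  toFun b x := if x ∈ C p then 0 else b (Nat.unpair (lev x)).1 * (p : ℚ_[p]) ^ lev x
  map_add' b c := by
    ext x
    by_cases h : x ∈ C p <;> simp [h, add_mul]
  map_smul' r b := by
    ext x
    by_cases h : x ∈ C p <;> simp [h, mul_assoc]

lemma Phi_mem (b : ℕ → ℚ_[p]) {x : ℤ_[p]} (h : x ∈ C p) : Phi p b x = 0 := by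
  simp [Phi, h]

lemma Phi_notMem (b : ℕ → ℚ_[p]) {x : ℤ_[p]} (h : x ∉ C p) :
    Phi p b x = b (Nat.unpair (lev x)).1 * (p : ℚ_[p]) ^ lev x := by
  simp [Phi, h]

lemma Phi_add (b : ℕ → ℚ_[p]) {c : ℤ_[p]} (h : c ∈ C p) (k : ℕ) :
    Phi p b (c + (p : ℤ_[p]) ^ (2 * k + 1)) = b (Nat.unpair k).1 * (p : ℚ_[p]) ^ k := by
  rw [Phi_notMem b (fun hC => hC k (hit_add h k)), lev_add h]

lemma Phi_loc (b : ℕ → ℚ_[p]) {x : ℤ_[p]} (h : x ∉ C p) :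
    ∀ᶠ y in 𝓝 x, Phi p b y = Phi p b x := by
  filter_upwards [eventually_dvd x (2 * lev x + 2)] with y hy
  have h1 : lev y = lev x := by
    apply lev_eq
    · exact (hit_congr le_rfl hy).2 (lev_hit h)
    · intro j hj
      rw [hit_congr (by omega) hy]
      exact not_hit_of_lt hj
  have h2 : y ∉ C p := fun hC => hC _ ((hit_congr le_rfl hy).2 (lev_hit h))
  rw [Phi_notMem b h, Phi_notMem b h2, h1]

lemma Phi_cont (b : ℕ → ℚ_[p]) {K : ℝ} (hb : ∀ i, ‖b i‖ ≤ K) : Continuous (Phi p b) := by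
  have hp1 : (1 : ℝ) < p := by exact_mod_cast (Fact.out : p.Prime).one_lt
  have hK : 0 ≤ K := (norm_nonneg _).trans (hb 0)
  rw [continuous_iff_continuousAt]
  intro x
  by_cases h : x ∈ C p
  · rw [ContinuousAt, Phi_mem b h, Metric.tendsto_nhds]
    intro ε hε
    have ht : Tendsto (fun n : ℕ => K * ((p : ℝ)⁻¹) ^ n) atTop (𝓝 0) := by
      simpa using (tendsto_pow_atTop_nhds_zero_of_lt_one (by positivity)
        (inv_lt_one_of_one_lt₀ hp1)).const_mul K
    obtain ⟨n, hn⟩ := (ht.eventually (gt_mem_nhds hε)).exists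
    filter_upwards [eventually_dvd x (2 * n + 2)] with y hy
    rw [dist_zero_right]
    by_cases hyC : y ∈ C p
    · rw [Phi_mem b hyC]; simpa using hε
    · have hl : n ≤ lev y := by
        by_contra hlt
        push Not at hlt
        exact h _ ((hit_congr (by omega) hy).1 (lev_hit hyC))
      rw [Phi_notMem b hyC, norm_mul, norm_pow, Padic.norm_p]
      refine lt_of_le_of_lt ?_ hn
      exact mul_le_mul (hb _) (pow_le_pow_of_le_one (by positivity)
        (inv_le_one_of_one_le₀ hp1.le) hl) (by positivity) hK
  · exact tendsto_const_nhds.congr' ((Phi_loc b h).mono fun y hy => hy.symm)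

lemma tendsto_add (a : ℤ_[p]) {u : ℕ → ℕ} (hu : Tendsto u atTop atTop) :
    Tendsto (fun n => a + (p : ℤ_[p]) ^ (u n)) atTop (𝓝[{a}ᶜ] a) := by
  have hp1 : (1 : ℝ) < p := by exact_mod_cast (Fact.out : p.Prime).one_lt
  have h0 : (p : ℤ_[p]) ≠ 0 := by exact_mod_cast (Fact.out : p.Prime).ne_zero
  rw [tendsto_nhdsWithin_iff]
  constructor
  · have : Tendsto (fun n => (p : ℤ_[p]) ^ n) atTop (𝓝 0) := by
      apply tendsto_pow_atTop_nhds_zero_of_norm_lt_one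
      rw [PadicInt.norm_p]
      exact inv_lt_one_of_one_lt₀ hp1
    simpa using (this.comp hu).const_add a
  · filter_upwards with n
    simp [h0]

lemma deriv_zero (b : ℕ → ℚ_[p]) {a : ℤ_[p]} (h : a ∉ C p) : PadicIntDerivAt p (Phi p b) a 0 := by
  apply tendsto_const_nhds.congr'
  filter_upwards [nhdsWithin_le_nhds (Phi_loc b h)] with y hy
  rw [hy]; simp

lemma deriv_unique {f : ℤ_[p] → ℚ_[p]} {a : ℤ_[p]} {L L' : ℚ_[p]}
    (h : PadicIntDerivAt p f a L) (h' : PadicIntDerivAt p f a L') : L = L' :=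
  tendsto_nhds_unique (h.comp (tendsto_add a tendsto_id)) (h'.comp (tendsto_add a tendsto_id))

lemma not_deriv {b : ℕ → ℚ_[p]} (hb : b ≠ 0) {c : ℤ_[p]} (h : c ∈ C p) (L : ℚ_[p]) :
    ¬ PadicIntDerivAt p (Phi p b) c L := by
  intro hL
  have hp1 : (1 : ℝ) < p := by exact_mod_cast (Fact.out : p.Prime).one_lt
  have h0 : (p : ℚ_[p]) ≠ 0 := by exact_mod_cast (Fact.out : p.Prime).ne_zero
  obtain ⟨i, hi⟩ := Function.ne_iff.1 hb
  have hi : b i ≠ 0 := hi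
  have hk : Tendsto (fun j => Nat.pair i j) atTop atTop :=
    tendsto_atTop_mono (fun j => Nat.right_le_pair i j) tendsto_id
  have hu : Tendsto (fun j => 2 * Nat.pair i j + 1) atTop atTop :=
    tendsto_atTop_mono (fun j => by have := Nat.right_le_pair i j; simp only [id]; omega) tendsto_id
  have h1 := (hL.comp (tendsto_add c hu)).norm
  have h2 : Tendsto (fun j => ‖b i‖ * (p : ℝ) ^ (Nat.pair i j + 1)) atTop atTop :=
    Tendsto.const_mul_atTop (norm_pos_iff.2 hi)
      ((tendsto_pow_atTop_atTop_of_one_lt hp1).comp ((tendsto_add_atTop_nat 1).comp hk))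
  refine not_tendsto_nhds_of_tendsto_atTop h2 ‖L‖ (h1.congr fun j => ?_)
  simp only [Function.comp]
  rw [Phi_add b h, Phi_mem b h, Nat.unpair_pair]
  generalize Nat.pair i j = k
  have : ((c + (p : ℤ_[p]) ^ (2 * k + 1) : ℤ_[p]) : ℚ_[p]) - c = (p : ℚ_[p]) ^ (2 * k + 1) := by
    push_cast
    ring
  rw [this, sub_zero, norm_div, norm_mul, norm_pow, norm_pow, Padic.norm_p, inv_pow, inv_pow]
  have : (p : ℝ) ≠ 0 := by positivity
  field_simp
  ring

lemma Phi_inj : Function.Injective (Phi p) := by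
  rw [injective_iff_map_eq_zero]
  intro b hb
  by_contra hne
  have hne' : (C p).Nonempty := by
    rw [Set.nonempty_iff_ne_empty]
    intro he
    have := mk_C (p := p)
    rw [he] at this
    simp at this
    exact Cardinal.continuum_ne_zero this.symm
  obtain ⟨c, hc⟩ := hne'
  apply not_deriv hne hc 0
  rw [hb]
  simpa [PadicIntDerivAt] using tendsto_const_nhds

/-- geometric sequences -/
noncomputable def geo (t : ℤ_[p]) : ℕ → ℚ_[p] := fun n => (t : ℚ_[p]) ^ n

lemma geo_inj : Function.Injective (geo (p := p)) := by
  intro s t h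
  have := congrFun h 1
  exact Subtype.ext (by simpa [geo] using this)

lemma geo_li : LinearIndependent ℚ_[p] (geo (p := p)) := by
  have h := linearIndependent_monoidHom (Multiplicative ℕ) ℚ_[p]
  have h2 := h.comp (fun t : ℤ_[p] => powersHom ℚ_[p] (t : ℚ_[p])) (by
    intro s t hst
    exact Subtype.ext (by simpa using hst))
  exact h2

lemma geo_bdd {b : ℕ → ℚ_[p]} (hb : b ∈ Submodule.span ℚ_[p] (Set.range (geo (p := p)))) :
    ∃ K, ∀ i, ‖b i‖ ≤ K := by
  induction hb using Submodule.span_induction with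
  | mem x h =>
    obtain ⟨t, rfl⟩ := h
    refine ⟨1, fun i => ?_⟩
    simp only [geo, norm_pow]
    exact pow_le_one₀ (norm_nonneg _) (PadicInt.norm_le_one t)
  | zero => exact ⟨0, by simp⟩
  | add x y _ _ hx hy =>
    obtain ⟨K, hK⟩ := hx
    obtain ⟨K', hK'⟩ := hy
    exact ⟨K + K', fun i => (norm_add_le _ _).trans (add_le_add (hK i) (hK' i))⟩
  | smul r x _ hx =>
    obtain ⟨K, hK⟩ := hx
    refine ⟨‖r‖ * K, fun i => ?_⟩
    simp only [Pi.smul_apply, smul_eq_mul, norm_mul]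
    gcongr
    exact hK i

end CantorPadic

open CantorPadic in
theorem stmt_7 (p : ℕ) [Fact p.Prime] [MeasurableSpace ℤ_[p]] [BorelSpace ℤ_[p]]
    (μ : MeasureTheory.Measure ℤ_[p]) (hμ : μ ≠ 0) [MeasureTheory.IsFiniteMeasure μ]
    [μ.IsAddLeftInvariant] [μ.Regular] :
    ∃ M : Submodule ℚ_[p] (ℤ_[p] → ℚ_[p]),
      Module.rank ℚ_[p] M = Cardinal.continuum ∧
      ∀ f ∈ (M : Set (ℤ_[p] → ℚ_[p])), f ≠ 0 →
        Continuous f ∧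
        ∃ B : Set ℤ_[p], MeasurableSet B ∧
          μ Bᶜ = 0 ∧
          (∀ a ∈ B, ∃ L : ℚ_[p], PadicIntDerivAt p f a L) ∧
          (∃ C : ℝ, ∀ a ∈ B, ∀ L : ℚ_[p], PadicIntDerivAt p f a L → ‖L‖ ≤ C) ∧
          (∀ a ∈ Bᶜ, ¬ ∃ L : ℚ_[p], PadicIntDerivAt p f a L) ∧
          Cardinal.mk ↥(Bᶜ) = Cardinal.continuum := by
  refine ⟨(Submodule.span ℚ_[p] (Set.range (geo (p := p)))).map (Phi p), ?_, ?_⟩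
  · rw [← (Submodule.equivMapOfInjective (Phi p) Phi_inj _).rank_eq, rank_span geo_li,
      Cardinal.mk_range_eq _ geo_inj, mk_padicInt]
  · rintro f ⟨b, hb, rfl⟩ hf
    have hb0 : b ≠ 0 := by rintro rfl; exact hf (map_zero _)
    obtain ⟨K, hK⟩ := geo_bdd hb
    refine ⟨Phi_cont b hK, (C p)ᶜ, isClosed_C.measurableSet.compl, ?_, ?_, ⟨0, ?_⟩, ?_, ?_⟩
    · rw [compl_compl]; exact measure_C μ
    · exact fun a ha => ⟨0, deriv_zero b ha⟩
    · intro a ha L hL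
      rw [deriv_unique hL (deriv_zero b ha), norm_zero]
    · rw [compl_compl]
      rintro a ha ⟨L, hL⟩
      exact not_deriv hb0 ha L hL
    · rw [compl_compl]; exact mk_C
end

section
/- Let p be a prime. For α ∈ ℤ_p define the binomial series function F_α : ℚ_p → ℚ_p by F_α(x) = ∑'_{k : ℕ} ((∏_{j < k} ((α : ℚ_p) - j)) / k!) · x^k (a tsum in ℚ_p; this series converges whenever ‖x‖ ≤ p⁻¹, where it represents (1+x)^α). Let n ≥ 1, let α₁, …, αₙ ∈ ℤ_p be pairwise distinct with αᵢ ≠ 0 for all i, and let γ₁, …, γₙ ∈ ℚ_p with γᵢ ≠ 0 for all i. Then the function x ↦ ∑_{i=1}^n γᵢ · F_{αᵢ}(x) is not constant on the ball pℤ_p = {x ∈ ℚ_p : ‖x‖ ≤ p⁻¹}: there exist x, y ∈ ℚ_p with ‖x‖ ≤ p⁻¹, ‖y‖ ≤ p⁻¹ and ∑_{i=1}^n γᵢ·F_{αᵢ}(x) ≠ ∑_{i=1}^n γᵢ·F_{αᵢ}(y). -/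
/-- The `p`-adic binomial series `x ↦ ∑' k, (α (α - 1) ⋯ (α - k + 1) / k!) x^k`, which for
`‖x‖ ≤ p⁻¹` converges and represents `(1 + x) ^ α` for `α ∈ ℤ_[p]`. -/
noncomputable def padicBinomialSeries (p : ℕ) [Fact p.Prime] (α : ℤ_[p]) (x : ℚ_[p]) :
    ℚ_[p] :=
  ∑' k : ℕ,
    ((∏ j ∈ Finset.range k, ((α : ℚ_[p]) - (j : ℚ_[p]))) / (Nat.factorial k : ℚ_[p])) * x ^ k

lemma padicBinom_coeff_norm_le (p : ℕ) [Fact p.Prime] (α : ℤ_[p]) (k : ℕ) :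
    ‖(∏ j ∈ Finset.range k, ((α : ℚ_[p]) - (j : ℚ_[p]))) / (Nat.factorial k : ℚ_[p])‖ ≤ 1 := by
  have h := Ring.descPochhammer_eq_factorial_smul_choose α k
  have h2 : (∏ j ∈ Finset.range k, (α - (j : ℤ_[p]))) = (Nat.factorial k : ℤ_[p]) * Ring.choose α k := by
    rw [← nsmul_eq_mul, ← h, ← descPochhammer_eval_eq_prod_range, ← Polynomial.aeval_eq_smeval,
      ← descPochhammer_map (algebraMap ℤ ℤ_[p]), Polynomial.eval_map_algebraMap]
  have h4 : (∏ j ∈ Finset.range k, ((α : ℚ_[p]) - (j : ℚ_[p]))) =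
      (Nat.factorial k : ℚ_[p]) * ((Ring.choose α k : ℤ_[p]) : ℚ_[p]) := by
    have h5 := congrArg (PadicInt.Coe.ringHom (p := p)) h2
    rw [map_prod, map_mul, map_natCast] at h5
    simp only [map_sub, map_natCast] at h5
    exact h5
  rw [h4, mul_div_cancel_left₀ _ (by exact_mod_cast Nat.factorial_ne_zero k)]
  exact PadicInt.norm_le_one _

lemma padicBinom_hasSum (p : ℕ) [Fact p.Prime] (α : ℤ_[p]) (x : ℚ_[p]) (hx : ‖x‖ < 1) :
    HasSum (fun k : ℕ => ((∏ j ∈ Finset.range k, ((α : ℚ_[p]) - (j : ℚ_[p]))) /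
      (Nat.factorial k : ℚ_[p])) * x ^ k) (padicBinomialSeries p α x) := by
  refine Summable.hasSum ?_
  refine Summable.of_norm_bounded (summable_geometric_of_lt_one (norm_nonneg x) hx) fun k => ?_
  rw [norm_mul, norm_pow]
  exact mul_le_of_le_one_left (by positivity) (padicBinom_coeff_norm_le p α k)

theorem stmt_8 (p : ℕ) [Fact p.Prime] (n : ℕ) (hn : 1 ≤ n)
    (α : Fin n → ℤ_[p]) (hdist : Function.Injective α) (hα : ∀ i, α i ≠ 0)
    (γ : Fin n → ℚ_[p]) (hγ : ∀ i, γ i ≠ 0) :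
    ∃ x y : ℚ_[p], ‖x‖ ≤ (p : ℝ)⁻¹ ∧ ‖y‖ ≤ (p : ℝ)⁻¹ ∧
      (∑ i, γ i * padicBinomialSeries p (α i) x) ≠
        (∑ i, γ i * padicBinomialSeries p (α i) y) := by
  by_contra! hcon
  have hp : 0 < (p : ℝ)⁻¹ := by
    have := (Fact.out : p.Prime).pos
    positivity
  set f : ℚ_[p] → ℚ_[p] := fun x => ∑ i, γ i * padicBinomialSeries p (α i) x with hf
  set d : ℕ → Fin n → ℚ_[p] := fun k i =>
    ∏ j ∈ Finset.range k, ((α i : ℚ_[p]) - (j : ℚ_[p])) with hd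
  set a : ℕ → ℚ_[p] := fun k => ∑ i, γ i * (d k i / (Nat.factorial k : ℚ_[p])) with ha
  have hps : HasFPowerSeriesAt f (FormalMultilinearSeries.ofScalars ℚ_[p] a) 0 := by
    rw [hasFPowerSeriesAt_iff]
    filter_upwards [Metric.ball_mem_nhds (0 : ℚ_[p]) one_pos] with z hz
    have hz' : ‖z‖ < 1 := by simpa using hz
    have := hasSum_sum (s := Finset.univ) fun i _ =>
      (padicBinom_hasSum p (α i) z hz').mul_left (γ i)
    rw [zero_add]
    have e : (fun k => z ^ k • (FormalMultilinearSeries.ofScalars ℚ_[p] a).coeff k) =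
        fun k => ∑ i, γ i * ((∏ j ∈ Finset.range k, ((α i : ℚ_[p]) - (j : ℚ_[p]))) /
          (Nat.factorial k : ℚ_[p]) * z ^ k) := by
      funext k
      rw [FormalMultilinearSeries.coeff_ofScalars, smul_eq_mul, ha, Finset.mul_sum]
      exact Finset.sum_congr rfl fun i _ => by ring
    rw [e]
    exact this
  have hconst : ∀ᶠ z in nhds (0 : ℚ_[p]), f z = f 0 := by
    filter_upwards [Metric.ball_mem_nhds (0 : ℚ_[p]) hp] with z hz
    have hz' : ‖z‖ < (p : ℝ)⁻¹ := by simpa using hz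
    exact hcon z 0 hz'.le (by simpa using hp.le)
  have heq := hps.eq_formalMultilinearSeries_of_eventually
    (hasFPowerSeriesAt_const (c := f 0) (e := (0 : ℚ_[p]))) hconst
  have hak : ∀ k, k ≠ 0 → ∑ i, γ i * d k i = 0 := by
    intro k hk
    have h1 : a k = 0 := by
      rw [← FormalMultilinearSeries.coeff_ofScalars (𝕜 := ℚ_[p]) (p := a) (n := k), heq,
        FormalMultilinearSeries.coeff, constFormalMultilinearSeries_apply_of_nonzero hk]
      rfl
    have h2 : a k = (∑ i, γ i * d k i) / (Nat.factorial k : ℚ_[p]) := by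
      rw [ha, Finset.sum_div]
      exact Finset.sum_congr rfl fun i _ => by ring
    rw [h2, div_eq_zero_iff] at h1
    exact h1.resolve_right (by exact_mod_cast Nat.factorial_ne_zero k)
  have hmk : ∀ m k, k ≠ 0 → ∑ i, γ i * ((α i : ℚ_[p]) ^ m * d k i) = 0 := by
    intro m
    induction m with
    | zero => simpa using hak
    | succ m ih =>
      intro k hk
      have e : ∑ i, γ i * ((α i : ℚ_[p]) ^ (m + 1) * d k i) =
          ∑ i, γ i * ((α i : ℚ_[p]) ^ m * d (k + 1) i) +
          k * ∑ i, γ i * ((α i : ℚ_[p]) ^ m * d k i) := by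
        rw [Finset.mul_sum, ← Finset.sum_add_distrib]
        refine Finset.sum_congr rfl fun i _ => ?_
        have : d (k + 1) i = d k i * ((α i : ℚ_[p]) - k) := Finset.prod_range_succ _ _
        rw [this]
        ring
      rw [e, ih _ (by omega), ih _ hk]
      simp
  have hv : (fun i => γ i * (α i : ℚ_[p])) = 0 := by
    refine Matrix.eq_zero_of_forall_pow_sum_mul_pow_eq_zero
      (f := fun i => (α i : ℚ_[p])) (fun i j h => hdist (Subtype.ext h)) fun m => ?_
    rw [← hmk m 1 one_ne_zero]
    refine Finset.sum_congr rfl fun i _ => ?_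
    simp [hd]
    ring
  have h0 := congrFun hv ⟨0, hn⟩
  simp only [Pi.zero_apply, mul_eq_zero] at h0
  rcases h0 with h0 | h0
  · exact hγ _ h0
  · exact hα _ (Subtype.ext h0)
end

section
/- Let p be a prime and let f : ℚ_p → ℚ_p be a function satisfying: (1) for every natural number n ≥ 1 and every x ∈ ℚ_p with ‖x - (p : ℚ_p)^n‖ < (p : ℝ)^(−2n), one has f x = (p : ℚ_p)^(2n); and (2) f x = 0 for every x not belonging to any of the balls {x : ‖x - (p : ℚ_p)^n‖ < (p : ℝ)^(−2n)}, n ≥ 1. (These balls are pairwise disjoint, so such f exists and is unique.) Then: (a) f is differentiable at every point of ℚ_p with derivative 0 (HasDerivAt f 0 x for all x, so f has identically zero, hence continuous, derivative); but (b) f is not strictly differentiable at 0: there is no L ∈ ℚ_p such that (f x - f y)/(x - y) tends to L as (x,y) → (0,0) within {(x,y) : x ≠ y} (equivalently, ¬ HasStrictDerivAt f L 0 for every L). -/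
/-- The function `f : ℚ_[p] → ℚ_[p]` equal to `p^{2n}` on each ball
`{x : ‖x - p^n‖ < p^{-2n}}` (`n ≥ 1`) and `0` elsewhere is everywhere differentiable
with derivative `0` (hence has continuous derivative), but is not strictly
differentiable at `0`. -/
theorem stmt_9 (p : ℕ) [Fact p.Prime] (f : ℚ_[p] → ℚ_[p])
    (h1 : ∀ n : ℕ, 1 ≤ n → ∀ x : ℚ_[p],
      ‖x - (p : ℚ_[p]) ^ n‖ < (p : ℝ) ^ (-(2 * (n : ℤ))) → f x = (p : ℚ_[p]) ^ (2 * n))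
    (h2 : ∀ x : ℚ_[p],
      (∀ n : ℕ, 1 ≤ n → ¬ ‖x - (p : ℚ_[p]) ^ n‖ < (p : ℝ) ^ (-(2 * (n : ℤ)))) → f x = 0) :
    (∀ x : ℚ_[p], HasDerivAt f 0 x) ∧ ∀ L : ℚ_[p], ¬ HasStrictDerivAt f L 0 := by
  have hP0 : 0 < ‖(p : ℚ_[p])‖ := by
    rw [norm_pos_iff]; exact_mod_cast (Fact.out : p.Prime).ne_zero
  have hP1 : ‖(p : ℚ_[p])‖ < 1 := Padic.norm_p_lt_one
  have hn0 : ∀ n : ℕ, 0 < ‖(p : ℚ_[p]) ^ n‖ := fun n => by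
    rw [norm_pow]; positivity
  have hn1 : ∀ n : ℕ, 1 ≤ n → ‖(p : ℚ_[p]) ^ n‖ < 1 := fun n hn => by
    rw [norm_pow]; exact pow_lt_one₀ hP0.le hP1 (by omega)
  have hc : ∀ n : ℕ, (p : ℝ) ^ (-(2 * (n : ℤ))) = ‖(p : ℚ_[p]) ^ n‖ ^ 2 := fun n => by
    rw [Padic.norm_p_pow, ← zpow_natCast, ← zpow_mul]
    congr 1; push_cast; ring
  simp only [hc] at h1 h2
  have hult : ∀ x y : ℚ_[p], ‖x - y‖ < ‖y‖ → ‖x‖ = ‖y‖ := fun x y h => by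
    have := IsUltrametricDist.norm_add_eq_max_of_norm_ne_norm h.ne
    rw [sub_add_cancel, max_eq_right h.le] at this
    exact this
  have hsq : ∀ n : ℕ, 1 ≤ n → ‖(p : ℚ_[p]) ^ n‖ ^ 2 < ‖(p : ℚ_[p]) ^ n‖ := fun n hn => by
    have := hn0 n
    have := hn1 n hn
    nlinarith
  have hball : ∀ n : ℕ, 1 ≤ n → ∀ x : ℚ_[p], ‖x - (p : ℚ_[p]) ^ n‖ < ‖(p : ℚ_[p]) ^ n‖ ^ 2 →
      ‖x‖ = ‖(p : ℚ_[p]) ^ n‖ := fun n hn x hx => hult _ _ (hx.trans (hsq n hn))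
  have hinj : ∀ n m : ℕ, ‖(p : ℚ_[p]) ^ n‖ = ‖(p : ℚ_[p]) ^ m‖ → n = m := fun n m h => by
    rw [norm_pow, norm_pow] at h
    exact (pow_right_strictAnti₀ hP0 hP1).injective h
  have hbound : ∀ x, ‖f x‖ ≤ ‖x‖ ^ 2 := fun x => by
    by_cases h : ∀ n : ℕ, 1 ≤ n → ¬ ‖x - (p : ℚ_[p]) ^ n‖ < ‖(p : ℚ_[p]) ^ n‖ ^ 2
    · rw [h2 x h, norm_zero]; positivity
    · push Not at h
      obtain ⟨n, hn, hx⟩ := h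
      rw [h1 n hn x hx, hball n hn x hx, norm_pow, norm_pow, ← pow_mul, mul_comm]
  have hf0 : f 0 = 0 := by simpa using hbound 0
  have hA : ∀ x : ℚ_[p], HasDerivAt f 0 x := by
    intro x
    by_cases hx : x = 0
    · subst hx
      rw [hasDerivAt_iff_isLittleO_nhds_zero]
      simp only [zero_add, hf0, sub_zero, smul_zero]
      refine Asymptotics.IsBigO.trans_isLittleO (g := fun h : ℚ_[p] => h ^ 2) ?_ ?_
      · exact Asymptotics.IsBigO.of_bound 1 (Filter.Eventually.of_forall fun y => by
          simpa using hbound y)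
      · exact Asymptotics.isLittleO_pow_id one_lt_two
    · have hx0 : 0 < ‖x‖ := norm_pos_iff.2 hx
      refine (hasDerivAt_const x (f x)).congr_of_eventuallyEq ?_
      have hmem : Metric.ball x (min ‖x‖ (‖x‖ ^ 2)) ∈ nhds x :=
        Metric.ball_mem_nhds _ (by positivity)
      filter_upwards [hmem] with y hy
      rw [mem_ball_iff_norm, lt_min_iff] at hy
      obtain ⟨hy1, hy2⟩ := hy
      have hyx := hult _ _ hy1
      have key : ∀ a b : ℚ_[p], ‖b - a‖ < ‖a‖ ^ 2 → ‖b‖ = ‖a‖ → ∀ n : ℕ, 1 ≤ n →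
          ‖a - (p : ℚ_[p]) ^ n‖ < ‖(p : ℚ_[p]) ^ n‖ ^ 2 →
          ‖b - (p : ℚ_[p]) ^ n‖ < ‖(p : ℚ_[p]) ^ n‖ ^ 2 := by
        intro a b hab _ n hn ha
        have e := hball n hn a ha
        rw [e] at hab
        have := IsUltrametricDist.norm_add_le_max (b - a) (a - (p : ℚ_[p]) ^ n)
        rw [sub_add_sub_cancel] at this
        exact this.trans_lt (max_lt hab ha)
      by_cases h : ∀ n : ℕ, 1 ≤ n → ¬ ‖x - (p : ℚ_[p]) ^ n‖ < ‖(p : ℚ_[p]) ^ n‖ ^ 2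
      · rw [h2 x h, h2 y]
        intro n hn hyn
        refine h n hn (key y x ?_ hyx.symm n hn hyn)
        rw [norm_sub_rev, hyx]; exact hy2
      · push Not at h
        obtain ⟨n, hn, hxn⟩ := h
        rw [h1 n hn x hxn, h1 n hn y (key x y hy2 hyx n hn hxn)]
  refine ⟨hA, fun L hL => ?_⟩
  have hL0 : L = 0 := hL.hasDerivAt.unique (hA 0)
  subst hL0
  have hlo := hL.isLittleO
  have hev := hlo.def (c := 1 / 2) (by norm_num)
  have ht : Filter.Tendsto (fun n : ℕ => (p : ℚ_[p]) ^ n) Filter.atTop (nhds 0) :=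
    tendsto_pow_atTop_nhds_zero_of_norm_lt_one hP1
  have ht2 : Filter.Tendsto (fun n : ℕ => ((p : ℚ_[p]) ^ n,
      (p : ℚ_[p]) ^ n + ((p : ℚ_[p]) ^ n) ^ 2)) Filter.atTop (nhds ((0 : ℚ_[p]), (0 : ℚ_[p]))) := by
    refine ht.prodMk_nhds ?_
    simpa using ht.add (ht.pow 2)
  obtain ⟨n, hn, hn1'⟩ := ((ht2.eventually hev).and (Filter.eventually_ge_atTop 1)).exists
  have hfx : f ((p : ℚ_[p]) ^ n) = (p : ℚ_[p]) ^ (2 * n) := by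
    apply h1 n hn1'
    have := hn0 n
    rw [sub_self, norm_zero]; positivity
  have hfy : f ((p : ℚ_[p]) ^ n + ((p : ℚ_[p]) ^ n) ^ 2) = 0 := by
    apply h2
    intro m hm hlt
    have e1 := hball m hm _ hlt
    have e2 : ‖(p : ℚ_[p]) ^ n + ((p : ℚ_[p]) ^ n) ^ 2‖ = ‖(p : ℚ_[p]) ^ n‖ := by
      apply hult
      rw [add_sub_cancel_left, norm_pow _ 2]
      exact hsq n hn1'
    have e3 := hinj n m (e2.symm.trans e1)
    subst e3
    rw [add_sub_cancel_left, norm_pow _ 2] at hlt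
    exact lt_irrefl _ hlt
  simp only [hfx, hfy] at hn
  have e4 : (p : ℚ_[p]) ^ (2 * n) = ((p : ℚ_[p]) ^ n) ^ 2 := by rw [← pow_mul, mul_comm]
  rw [e4] at hn
  have h0 := hn0 n
  have h3 : 0 < ‖(p : ℚ_[p]) ^ n‖ ^ 2 := by positivity
  have e5 : (p : ℚ_[p]) ^ n - ((p : ℚ_[p]) ^ n + ((p : ℚ_[p]) ^ n) ^ 2)
    = -((p : ℚ_[p]) ^ n) ^ 2 := by ring
  rw [e5, norm_neg] at hn
  simp only [ContinuousLinearMap.toSpanSingleton_apply, smul_zero, sub_zero] at hn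
  rw [norm_pow _ 2] at hn
  linarith
end

section
/- Let p be a prime and let g : ℚ_p → ℚ_p be a function satisfying: (1) for every natural number n ≥ 1 and every x ∈ ℚ_p with ‖x‖ = (p : ℝ)^(−n²), one has g x = (p : ℚ_p)^n; and (2) g x = 0 for every x whose norm is not of the form (p : ℝ)^(−n²) with n ≥ 1. (The spheres {x : ‖x‖ = p^{−n²}} are pairwise disjoint, so such g exists.) Then: (a) g is continuous on ℚ_p; (b) g is differentiable at every x ≠ 0 with deriv g x = 0; (c) g is not differentiable at 0; and (d) for every real α > 0 there is no M > 0 with ‖g x - g y‖ ≤ M·‖x - y‖^α for all x, y ∈ ℚ_p. -/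
/-- The function `g : ℚ_[p] → ℚ_[p]` equal to `p^n` on each sphere
`{x : ‖x‖ = p^{-n²}}` (`n ≥ 1`) and `0` elsewhere is continuous, differentiable with
derivative `0` at every `x ≠ 0`, not differentiable at `0`, and not Lipschitz of any
order `α > 0`. -/
theorem stmt_10 (p : ℕ) [Fact p.Prime] (g : ℚ_[p] → ℚ_[p])
    (h1 : ∀ n : ℕ, 1 ≤ n → ∀ x : ℚ_[p],
      ‖x‖ = (p : ℝ) ^ (-((n : ℤ) ^ 2)) → g x = (p : ℚ_[p]) ^ n)
    (h2 : ∀ x : ℚ_[p],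
      (∀ n : ℕ, 1 ≤ n → ‖x‖ ≠ (p : ℝ) ^ (-((n : ℤ) ^ 2))) → g x = 0) :
    Continuous g ∧
    (∀ x : ℚ_[p], x ≠ 0 → HasDerivAt g 0 x) ∧
    ¬ DifferentiableAt ℚ_[p] g 0 ∧
    ∀ α : ℝ, 0 < α →
      ¬ ∃ M : ℝ, 0 < M ∧ ∀ x y : ℚ_[p], ‖g x - g y‖ ≤ M * ‖x - y‖ ^ α := by
  have hp1 : (1 : ℝ) < p := by exact_mod_cast (Fact.out : p.Prime).one_lt
  have hp0 : (0 : ℝ) < p := by linarith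
  have hnorm : ∀ x y : ℚ_[p], ‖x‖ = ‖y‖ → g x = g y := by
    intro x y h
    by_cases hx : ∃ n : ℕ, 1 ≤ n ∧ ‖x‖ = (p : ℝ) ^ (-((n : ℤ) ^ 2))
    · obtain ⟨n, hn, hx⟩ := hx
      rw [h1 n hn x hx, h1 n hn y (h ▸ hx)]
    · push Not at hx
      rw [h2 x hx, h2 y (h ▸ hx)]
  have g0 : g 0 = 0 := by
    apply h2
    intro n _
    rw [norm_zero]
    exact (zpow_pos hp0 _).ne
  have hloc : ∀ x : ℚ_[p], x ≠ 0 → g =ᶠ[nhds x] fun _ => g x := by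
    intro x hx
    filter_upwards [Metric.ball_mem_nhds x (norm_pos_iff.mpr hx)] with y hy
    apply hnorm
    rw [Metric.mem_ball, dist_eq_norm] at hy
    have h3 : ‖y + -x‖ < max ‖y‖ ‖-x‖ := by
      rw [← sub_eq_add_neg, norm_neg]
      exact lt_max_of_lt_right hy
    have h4 := IsUltrametricDist.norm_eq_of_add_norm_lt_max h3
    rwa [norm_neg] at h4
  have hder : ∀ x : ℚ_[p], x ≠ 0 → HasDerivAt g 0 x := fun x hx =>
    (hasDerivAt_const x (g x)).congr_of_eventuallyEq (hloc x hx)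
  have hgn : ∀ n : ℕ, 1 ≤ n → ‖g ((p : ℚ_[p]) ^ (n ^ 2))‖ = (p : ℝ) ^ (-(n : ℝ)) := by
    intro n hn
    rw [h1 n hn, norm_pow, Padic.norm_p, Real.rpow_neg hp0.le, Real.rpow_natCast, inv_pow]
    rw [norm_pow, Padic.norm_p, zpow_neg, inv_pow]
    norm_cast
  have hxn : ∀ n : ℕ, ‖((p : ℚ_[p]) ^ (n ^ 2))‖ = (p : ℝ) ^ (-(n : ℝ) ^ 2) := by
    intro n
    rw [norm_pow, Padic.norm_p, Real.rpow_neg hp0.le, inv_pow]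
    norm_cast
  have key : ∀ α : ℝ, 0 < α → ∀ M : ℝ, ∀ᶠ n : ℕ in Filter.atTop,
      M * ‖((p : ℚ_[p]) ^ (n ^ 2))‖ ^ α < ‖g ((p : ℚ_[p]) ^ (n ^ 2))‖ := by
    intro α hα M
    have e1 : ∀ᶠ n : ℕ in Filter.atTop, M < (p : ℝ) ^ n :=
      (tendsto_pow_atTop_atTop_of_one_lt hp1).eventually_gt_atTop M
    have e2 : ∀ᶠ n : ℕ in Filter.atTop, 2 / α < (n : ℝ) :=
      tendsto_natCast_atTop_atTop.eventually_gt_atTop _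
    filter_upwards [e1, e2, Filter.eventually_ge_atTop 1] with n hM hn hn1
    rw [hgn n hn1, hxn, ← Real.rpow_mul hp0.le]
    rw [div_lt_iff₀ hα] at hn
    have hn0 : (0 : ℝ) ≤ n := by positivity
    calc M * (p : ℝ) ^ (-(n : ℝ) ^ 2 * α)
        < (p : ℝ) ^ n * (p : ℝ) ^ (-(n : ℝ) ^ 2 * α) := by
          gcongr
      _ = (p : ℝ) ^ ((n : ℝ) + -(n : ℝ) ^ 2 * α) := by
          rw [Real.rpow_add hp0, Real.rpow_natCast]
      _ ≤ _ := by
          apply Real.rpow_le_rpow_of_exponent_le hp1.le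
          nlinarith
  refine ⟨?_, hder, ?_, ?_⟩
  · rw [continuous_iff_continuousAt]
    intro x
    by_cases hx : x = 0
    · subst hx
      rw [Metric.continuousAt_iff]
      intro ε hε
      obtain ⟨N, hN⟩ := exists_pow_lt_of_lt_one hε (inv_lt_one_of_one_lt₀ hp1)
      refine ⟨(p : ℝ) ^ (-((N : ℤ) ^ 2)), zpow_pos hp0 _, ?_⟩
      intro y hy
      rw [dist_zero_right] at hy
      rw [g0, dist_zero_right]
      by_cases hx : ∃ n : ℕ, 1 ≤ n ∧ ‖y‖ = (p : ℝ) ^ (-((n : ℤ) ^ 2))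
      · obtain ⟨n, hn, hx⟩ := hx
        rw [h1 n hn y hx, norm_pow, Padic.norm_p]
        rw [hx, zpow_lt_zpow_iff_right₀ hp1] at hy
        have : N ≤ n := by
          by_contra hc
          push Not at hc
          have : (n : ℤ) < N := by exact_mod_cast hc
          nlinarith
        exact (pow_le_pow_of_le_one (by positivity) (inv_lt_one_of_one_lt₀ hp1).le this).trans_lt hN
      · push Not at hx
        rw [h2 y hx, norm_zero]
        exact hε
    · exact (hder x hx).continuousAt
  · intro hd
    obtain ⟨C, hC⟩ := hd.isBigO_sub.bound
    have ht : Filter.Tendsto (fun n : ℕ => (p : ℚ_[p]) ^ (n ^ 2)) Filter.atTop (nhds 0) := by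
      have a : Filter.Tendsto (fun n : ℕ => (p : ℚ_[p]) ^ n) Filter.atTop (nhds 0) :=
        tendsto_pow_atTop_nhds_zero_of_norm_lt_one
          (by rw [Padic.norm_p]; exact inv_lt_one_of_one_lt₀ hp1)
      exact a.comp (Filter.tendsto_pow_atTop two_ne_zero)
    obtain ⟨n, h, h'⟩ := ((ht.eventually hC).and (key 1 one_pos C)).exists
    rw [g0, sub_zero, sub_zero] at h
    rw [Real.rpow_one] at h'
    linarith
  · rintro α hα ⟨M, _, hM⟩
    obtain ⟨n, h⟩ := (key α hα M).exists
    have := hM ((p : ℚ_[p]) ^ (n ^ 2)) 0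
    rw [g0, sub_zero, sub_zero] at this
    linarith
end
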